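/- arXiv:q-alg/9612027 — 4 statements merged into one kernel-verified Lean document; each statement's English description precedes it below -/
import Mathlib

section
/- Let λ ∈ ℂ and define on R the operators J¹ = M_{x²}∘D_x + M_{xy}∘D_y − λ·M_x, J² = M_{xy}∘D_x + M_{y²}∘D_y − λ·M_y, J³ = M_y∘D_x, J⁴ = D_x, J⁵ = D_y, J⁶ = M_x∘D_y, J⁷ = M_x∘D_x − (λ/3)·id, J⁸ = M_y∘D_y − (λ/3)·id. For every k ∈ ℕ, the ℂ-subspace of End(R) spanned by all compositions of at most k elements of {J¹, …, J⁸} (the empty composition being the identity) has dimension exactly (k+1)²(k+2)²/4; that is, 4 times its dimension equals (k+1)²(k+2)². -/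
noncomputable section

open MvPolynomial

/-- The bivariate polynomial ring `R = ℂ[x,y]`. -/
abbrev R2 : Type := MvPolynomial (Fin 2) ℂ

/-- The variable `x`. -/
def Xv : R2 := X 0

/-- The variable `y`. -/
def Yv : R2 := X 1

/-- The partial derivative `∂_x` as a `ℂ`-linear endomorphism. -/
def Dx : Module.End ℂ R2 := (pderiv (0 : Fin 2)).toLinearMap

/-- The partial derivative `∂_y` as a `ℂ`-linear endomorphism. -/
def Dy : Module.End ℂ R2 := (pderiv (1 : Fin 2)).toLinearMap

/-- Multiplication by `f` as an endomorphism. -/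
def Mf (f : R2) : Module.End ℂ R2 := LinearMap.mulLeft ℂ f

/-- All compositions (products) of at most `k` elements of `S`; the empty
composition is the identity. -/
def prodsLE (k : ℕ) (S : Set (Module.End ℂ R2)) : Set (Module.End ℂ R2) :=
  {T | ∃ l : List (Module.End ℂ R2), l.length ≤ k ∧ (∀ a ∈ l, a ∈ S) ∧ l.prod = T}

/-- The rectangular module `ℛ_{n,m}`. -/
def Rmod (n m : ℕ) : Submodule ℂ R2 :=
  Submodule.span ℂ {P : R2 | ∃ i j : ℕ, i ≤ n ∧ j ≤ m ∧ P = Xv ^ i * Yv ^ j}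

/-- The triangular module `𝒯ₙ`. -/
def Tmod (n : ℕ) : Submodule ℂ R2 :=
  Submodule.span ℂ {P : R2 | ∃ i j : ℕ, i + j ≤ n ∧ P = Xv ^ i * Yv ^ j}

/-- The staircase module `𝒮^r_{p,q}`. -/
def Smod (r p q : ℕ) : Submodule ℂ R2 :=
  Submodule.span ℂ {P : R2 | ∃ i j : ℕ, i + r * j ≤ p ∧ j ≤ q ∧ P = Xv ^ i * Yv ^ j}

/-- An endomorphism has nonpositive `y`-degree if it maps each monomial `xᵃyᵇ`
into the span of the monomials `x^c y^e` with `e ≤ b`. -/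
def NonposY (T : Module.End ℂ R2) : Prop :=
  ∀ a b : ℕ, T (Xv ^ a * Yv ^ b) ∈
    Submodule.span ℂ {P : R2 | ∃ c e : ℕ, e ≤ b ∧ P = Xv ^ c * Yv ^ e}

/-- `J¹ = M_{x²}∘D_x + M_{xy}∘D_y − a·M_x`. -/
def J1 (a : ℂ) : Module.End ℂ R2 := Mf (Xv ^ 2) * Dx + Mf (Xv * Yv) * Dy - a • Mf Xv

/-- `J² = M_{xy}∘D_x + M_{y²}∘D_y − a·M_y`. -/
def J2 (a : ℂ) : Module.End ℂ R2 := Mf (Xv * Yv) * Dx + Mf (Yv ^ 2) * Dy - a • Mf Yv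

/-- `J³ = M_y∘D_x`. -/
def J3 : Module.End ℂ R2 := Mf Yv * Dx

/-- `J⁴ = D_x`. -/
def J4 : Module.End ℂ R2 := Dx

/-- `J⁵ = D_y`. -/
def J5 : Module.End ℂ R2 := Dy

/-- `J⁶ = M_x∘D_y`. -/
def J6 : Module.End ℂ R2 := Mf Xv * Dy

/-- `J⁷ = M_x∘D_x − (a/3)·id`. -/
def J7 (a : ℂ) : Module.End ℂ R2 := Mf Xv * Dx - (a / 3) • 1

/-- `J⁸ = M_y∘D_y − (a/3)·id`. -/
def J8 (a : ℂ) : Module.End ℂ R2 := Mf Yv * Dy - (a / 3) • 1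


namespace Aux7

def ex (m n : ℕ) : Fin 2 →₀ ℕ := Finsupp.single 0 m + Finsupp.single 1 n

def mon (m n : ℕ) : R2 := Xv ^ m * Yv ^ n

lemma mon_eq (m n : ℕ) : mon m n = monomial (ex m n) 1 := by
  simp [mon, Xv, Yv, ex, X_pow_eq_monomial, monomial_mul]

lemma ex_inj {m n m' n' : ℕ} : ex m n = ex m' n' ↔ m = m' ∧ n = n' := by
  constructor
  · intro h
    have h0 := DFunLike.congr_fun h 0
    have h1 := DFunLike.congr_fun h 1
    simp [ex] at h0 h1
    exact ⟨h0, h1⟩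
  · rintro ⟨rfl, rfl⟩; rfl

lemma ex_eta (s : Fin 2 →₀ ℕ) : ex (s 0) (s 1) = s := by
  ext i; fin_cases i <;> simp [ex]

lemma coeff_mon (m n m' n' : ℕ) :
    coeff (ex m' n') (mon m n) = if m = m' ∧ n = n' then (1 : ℂ) else 0 := by
  rw [mon_eq, coeff_monomial]
  simp [ex_inj]

lemma end_ext {S T : Module.End ℂ R2} (h : ∀ m n, S (mon m n) = T (mon m n)) : S = T := by
  apply MvPolynomial.linearMap_ext
  intro s
  ext1
  have := h (s 0) (s 1)
  rw [mon_eq, ex_eta] at this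
  simpa using this

lemma Dx_mon (m n : ℕ) : Dx (mon m n) = (m : ℂ) • mon (m - 1) n := by
  have e : ex m n - Finsupp.single 0 1 = ex (m - 1) n := by
    ext i; fin_cases i <;> simp [ex]
  have : Dx (mon m n) = pderiv 0 (mon m n) := rfl
  rw [this, mon_eq, mon_eq, pderiv_monomial, smul_monomial, e]
  simp [ex]

lemma Dy_mon (m n : ℕ) : Dy (mon m n) = (n : ℂ) • mon m (n - 1) := by
  have e : ex m n - Finsupp.single 1 1 = ex m (n - 1) := by
    ext i; fin_cases i <;> simp [ex]
  have : Dy (mon m n) = pderiv 1 (mon m n) := rfl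
  rw [this, mon_eq, mon_eq, pderiv_monomial, smul_monomial, e]
  simp [ex]

lemma Mx_mon (m n : ℕ) : Mf Xv (mon m n) = mon (m + 1) n := by
  simp [Mf, mon]; ring

lemma My_mon (m n : ℕ) : Mf Yv (mon m n) = mon m (n + 1) := by
  simp [Mf, mon]; ring

/-- `G q s = ∏_{j<q} (λ - s - j)`. -/
def G (lam : ℂ) (q : ℕ) (s : ℕ) : ℂ := ∏ j ∈ Finset.range q, (lam - s - j)

lemma G_succ (lam : ℂ) (q s : ℕ) : G lam (q + 1) s = G lam q s * (lam - s - q) := by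
  simp [G, Finset.prod_range_succ]

/-- normally ordered operator -/
def O (lam : ℂ) (a b c d q : ℕ) : Module.End ℂ R2 :=
  (basisMonomials (Fin 2) ℂ).constr ℂ fun s =>
    (((s 0).descFactorial c : ℂ) * ((s 1).descFactorial d : ℂ) * G lam q (s 0 + s 1)) •
      mon (s 0 - c + a) (s 1 - d + b)

lemma O_mon (lam : ℂ) (a b c d q m n : ℕ) : O lam a b c d q (mon m n) =
    ((m.descFactorial c : ℂ) * (n.descFactorial d : ℂ) * G lam q (m + n)) •
      mon (m - c + a) (n - d + b) := by
  have : mon m n = basisMonomials (Fin 2) ℂ (ex m n) := by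
    rw [mon_eq, coe_basisMonomials]
  rw [O, this, Module.Basis.constr_basis]
  simp [ex]

/-- operator `x^m y^n ↦ (λ - m - n) x^m y^n` -/
def E0 (lam : ℂ) : Module.End ℂ R2 := lam • 1 - Mf Xv * Dx - Mf Yv * Dy

lemma Exx_mon (m n : ℕ) : (Mf Xv * Dx) (mon m n) = (m : ℂ) • mon m n := by
  rw [Module.End.mul_apply, Dx_mon, map_smul, Mx_mon]
  rcases m with _ | m <;> simp

lemma Eyy_mon (m n : ℕ) : (Mf Yv * Dy) (mon m n) = (n : ℂ) • mon m n := by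
  rw [Module.End.mul_apply, Dy_mon, map_smul, My_mon]
  rcases n with _ | m <;> simp

lemma E0_mon (lam : ℂ) (m n : ℕ) : E0 lam (mon m n) = (lam - m - n) • mon m n := by
  simp only [E0, LinearMap.sub_apply, Exx_mon, Eyy_mon, LinearMap.smul_apply, Module.End.one_apply]
  module

lemma Dx_O (lam : ℂ) (a b c d q : ℕ) :
    Dx * O lam a b c d q = O lam a b (c + 1) d q + (a : ℂ) • O lam (a - 1) b c d q := by
  apply end_ext
  intro m n
  simp only [Module.End.mul_apply, LinearMap.add_apply, LinearMap.smul_apply, O_mon, map_smul,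
    Dx_mon]
  rcases lt_trichotomy m c with h | rfl | h
  · simp [Nat.descFactorial_eq_zero_iff_lt.2 h]
  · simp [smul_smul, mul_comm]
  · obtain ⟨r, rfl⟩ : ∃ r, m = c + 1 + r := ⟨m - (c + 1), by omega⟩
    have e1 : c + 1 + r - c = r + 1 := by omega
    have e2 : c + 1 + r - (c + 1) = r := by omega
    have e3 : r + 1 + a - 1 = r + a := by omega
    rw [Nat.descFactorial_succ, e1, e2, e3]
    rcases a with _ | a
    · simp only [smul_smul]; push_cast; simp; congr 1; ring
    · have e4 : r + 1 + (a + 1 - 1) = r + (a + 1) := by omega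
      rw [e4]; simp only [smul_smul, ← add_smul]; push_cast; congr 1; ring

lemma Dy_O (lam : ℂ) (a b c d q : ℕ) :
    Dy * O lam a b c d q = O lam a b c (d + 1) q + (b : ℂ) • O lam a (b - 1) c d q := by
  apply end_ext
  intro n m
  simp only [Module.End.mul_apply, LinearMap.add_apply, LinearMap.smul_apply, O_mon, map_smul,
    Dy_mon]
  rcases lt_trichotomy m d with h | rfl | h
  · simp [Nat.descFactorial_eq_zero_iff_lt.2 h]
  · simp [smul_smul, mul_comm]
  · obtain ⟨r, rfl⟩ : ∃ r, m = d + 1 + r := ⟨m - (d + 1), by omega⟩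
    have e1 : d + 1 + r - d = r + 1 := by omega
    have e2 : d + 1 + r - (d + 1) = r := by omega
    have e3 : r + 1 + b - 1 = r + b := by omega
    rw [Nat.descFactorial_succ, e1, e2, e3]
    rcases b with _ | a
    · simp only [smul_smul]; push_cast; simp; congr 1; ring
    · have e4 : r + 1 + (a + 1 - 1) = r + (a + 1) := by omega
      rw [e4]; simp only [smul_smul, ← add_smul]; push_cast; congr 1; ring

lemma Mx_O (lam : ℂ) (a b c d q : ℕ) : Mf Xv * O lam a b c d q = O lam (a + 1) b c d q := by
  apply end_ext
  intro m n
  simp only [Module.End.mul_apply, O_mon, map_smul, Mx_mon, add_assoc]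

lemma My_O (lam : ℂ) (a b c d q : ℕ) : Mf Yv * O lam a b c d q = O lam a (b + 1) c d q := by
  apply end_ext
  intro m n
  simp only [Module.End.mul_apply, O_mon, map_smul, My_mon, add_assoc]

lemma E0_O (lam : ℂ) (a b c d q p : ℕ) (h : a + b + p = c + d + q) :
    E0 lam * O lam a b c d q = O lam a b c d (q + 1) + (p : ℂ) • O lam a b c d q := by
  apply end_ext
  intro m n
  simp only [Module.End.mul_apply, LinearMap.add_apply, LinearMap.smul_apply, O_mon, map_smul,
    E0_mon, G_succ]
  rcases lt_or_ge m c with hc | hc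
  · simp [Nat.descFactorial_eq_zero_iff_lt.2 hc]
  rcases lt_or_ge n d with hd | hd
  · simp [Nat.descFactorial_eq_zero_iff_lt.2 hd]
  have h' : (a : ℂ) + b + p = c + d + q := by exact_mod_cast h
  simp only [smul_smul, ← add_smul]
  push_cast [Nat.cast_sub hc, Nat.cast_sub hd]
  congr 1
  linear_combination (-((m.descFactorial c : ℂ) * (n.descFactorial d : ℂ) * G lam q (m + n))) * h'

/-- Euler relation -/
lemma O_red (lam : ℂ) (a b c d q : ℕ) :
    O lam a b c d (q + 1) = (lam - (c + d + q : ℕ)) • O lam a b c d q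
      - O lam (a + 1) b (c + 1) d q - O lam a (b + 1) c (d + 1) q := by
  apply end_ext
  intro m n
  simp only [LinearMap.sub_apply, LinearMap.smul_apply, O_mon, G_succ]
  have key : ∀ m c a n b : ℕ, ((m.descFactorial (c + 1) : ℕ) : ℂ) • mon (m - (c + 1) + (a + 1)) (n + b)
      = ((m : ℂ) - c) • (m.descFactorial c : ℂ) • mon (m - c + a) (n + b) := by
    intro m c a n b
    rcases lt_trichotomy m c with h | rfl | h
    · simp [Nat.descFactorial_eq_zero_iff_lt.2 h]
    · simp
    · have e : m - (c + 1) + (a + 1) = m - c + a := by omega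
      rw [e, Nat.descFactorial_succ, smul_smul]; push_cast [Nat.cast_sub h.le]; rfl
  have key' : ∀ m c a n b : ℕ, ((m.descFactorial (c + 1) : ℕ) : ℂ) • mon (n + b) (m - (c + 1) + (a + 1))
      = ((m : ℂ) - c) • (m.descFactorial c : ℂ) • mon (n + b) (m - c + a) := by
    intro m c a n b
    rcases lt_trichotomy m c with h | rfl | h
    · simp [Nat.descFactorial_eq_zero_iff_lt.2 h]
    · simp
    · have e : m - (c + 1) + (a + 1) = m - c + a := by omega
      rw [e, Nat.descFactorial_succ, smul_smul]; push_cast [Nat.cast_sub h.le]; rfl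
  have k1 := congrArg (fun v => ((n.descFactorial d : ℂ) * G lam q (m + n)) • v) (key m c a (n - d) b)
  have k2 := congrArg (fun v => ((m.descFactorial c : ℂ) * G lam q (m + n)) • v) (key' n d b (m - c) a)
  simp only [smul_smul] at k1 k2 ⊢
  have e1 : ∀ u v w : ℂ, u * v * w = v * w * u := by intros; ring
  rw [e1 (m.descFactorial (c + 1) : ℂ), k1]
  have e2 : ∀ u v w : ℂ, u * v * w = u * w * v := by intros; ring
  rw [e2 _ (n.descFactorial (d + 1) : ℂ), k2]
  simp only [← sub_smul]
  congr 1
  push_cast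
  ring

/-! ### Linear independence -/

lemma lin1 (K M : ℕ) (v : ℕ → ℂ)
    (h : ∀ m, M ≤ m → ∑ c ∈ Finset.range K, v c * (m.descFactorial c : ℂ) = 0) :
    ∀ c < K, v c = 0 := by
  let S : Polynomial.Sequence ℂ := ⟨fun n => descPochhammer ℂ n, fun n => by
    rw [Polynomial.degree_eq_natDegree (monic_descPochhammer ℂ n).ne_zero,
      descPochhammer_natDegree]⟩
  have hS := linearIndependent_iff'.1 S.linearIndependent (Finset.range K) v
  have h0 : ∑ c ∈ Finset.range K, v c • S c = 0 := by
    apply Polynomial.eq_zero_of_infinite_isRoot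
    have hinf : Set.Infinite ((fun m : ℕ => (m : ℂ)) '' Set.Ici M) :=
      (Set.Ici_infinite M).image (Nat.cast_injective.injOn)
    refine hinf.mono ?_
    rintro _ ⟨m, hm, rfl⟩
    simp only [Set.mem_ofPred_eq, Polynomial.IsRoot, Polynomial.eval_finsetSum,
      Polynomial.eval_smul, smul_eq_mul]
    rw [← h m hm]
    refine Finset.sum_congr rfl fun c _ => ?_
    congr 1
    exact descPochhammer_eval_eq_descFactorial ℂ m c
  intro c hc
  exact hS h0 c (Finset.mem_range.2 hc)

lemma lin2 (K M : ℕ) (u : ℕ → ℕ → ℂ)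
    (h : ∀ m n, M ≤ m → M ≤ n → ∑ c ∈ Finset.range K, ∑ d ∈ Finset.range K,
      u c d * (m.descFactorial c : ℂ) * (n.descFactorial d : ℂ) = 0) :
    ∀ c < K, ∀ d < K, u c d = 0 := by
  intro c hc
  apply lin1 K M
  intro n hn
  refine lin1 K M (fun c => ∑ d ∈ Finset.range K, u c d * (n.descFactorial d : ℂ)) ?_ c hc
  intro m hm
  rw [← h m n hm hn]
  refine Finset.sum_congr rfl fun c _ => ?_
  rw [Finset.sum_mul]
  refine Finset.sum_congr rfl fun d _ => ?_
  ring

lemma G_ne (lam : ℂ) : ∃ M : ℕ, ∀ q s, M ≤ s → G lam q s ≠ 0 := by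
  obtain ⟨M, hM⟩ := exists_nat_gt ‖lam‖
  refine ⟨M, fun q s hs => ?_⟩
  rw [G, Finset.prod_ne_zero_iff]
  intro j _ h0
  have : lam = ((s + j : ℕ) : ℂ) := by push_cast; linear_combination h0
  rw [this, Complex.norm_natCast] at hM
  have : s + j < M := by exact_mod_cast hM
  omega

/-- reduced operators -/
def B (lam : ℂ) (i : (ℕ × ℕ) × (ℕ × ℕ)) : Module.End ℂ R2 :=
  O lam i.1.1 i.1.2 i.2.1 i.2.2 (i.1.1 + i.1.2 - (i.2.1 + i.2.2))

lemma B_indep (lam : ℂ) : LinearIndependent ℂ (B lam) := by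
  classical
  rw [linearIndependent_iff']
  intro s g hg i0 hi0
  obtain ⟨M0, hM0⟩ := G_ne lam
  obtain ⟨K, hK⟩ : ∃ K, ∀ i ∈ s, i.2.1 < K ∧ i.2.2 < K := by
    refine ⟨s.sup (fun i => i.2.1 + i.2.2) + 1, fun i hi => ?_⟩
    have := Finset.le_sup (f := fun i : (ℕ × ℕ) × (ℕ × ℕ) => i.2.1 + i.2.2) hi
    have h' : i.2.1 + i.2.2 ≤ s.sup (fun i => i.2.1 + i.2.2) := this
    omega
  obtain ⟨⟨a0, b0⟩, ⟨c0, d0⟩⟩ := i0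
  let s' := s.filter (fun i => i.1.1 + c0 = a0 + i.2.1 ∧ i.1.2 + d0 = b0 + i.2.2)
  let u : ℕ → ℕ → ℂ := fun c d => ∑ i ∈ s' with i.2 = (c, d), g i
  have hu := lin2 K (M0 + K) u ?_ c0 (hK _ hi0).1 d0 (hK _ hi0).2
  · have : s'.filter (fun i => i.2 = (c0, d0)) = {((a0, b0), (c0, d0))} := by
      ext ⟨⟨a, b⟩, ⟨c, d⟩⟩
      simp only [s', Finset.mem_filter, Finset.mem_singleton, Prod.mk.injEq]
      constructor
      · rintro ⟨⟨_, h1, h2⟩, rfl, rfl⟩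
        refine ⟨⟨?_, ?_⟩, rfl, rfl⟩ <;> omega
      · rintro ⟨⟨rfl, rfl⟩, rfl, rfl⟩
        exact ⟨⟨hi0, rfl, rfl⟩, rfl, rfl⟩
    simp only [u, this, Finset.sum_singleton] at hu
    exact hu
  · intro m n hm hn
    have hG := hM0 (a0 + b0 - (c0 + d0)) (m + n) (by omega)
    have h1 := congrArg (fun T : Module.End ℂ R2 =>
      coeff (ex (m - c0 + a0) (n - d0 + b0)) (T (mon m n))) hg
    simp only [LinearMap.sum_apply, LinearMap.smul_apply, B, O_mon, coeff_sum, coeff_smul,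
      coeff_mon, LinearMap.zero_apply, coeff_zero, smul_eq_mul, mul_ite, mul_one, mul_zero] at h1
    have hc0 := hK _ hi0
    simp only at hc0
    have h2 : G lam (a0 + b0 - (c0 + d0)) (m + n) *
        ∑ i ∈ s', g i * (m.descFactorial i.2.1 : ℂ) * (n.descFactorial i.2.2 : ℂ) = 0 := by
      rw [← h1, Finset.mul_sum, Finset.sum_filter]
      refine Finset.sum_congr rfl fun i hi => ?_
      have := hK i hi
      by_cases hh : i.1.1 + c0 = a0 + i.2.1 ∧ i.1.2 + d0 = b0 + i.2.2
      · rw [if_pos hh, if_pos (by omega)]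
        have e : i.1.1 + i.1.2 - (i.2.1 + i.2.2) = a0 + b0 - (c0 + d0) := by omega
        rw [e]; ring
      · rw [if_neg hh, if_neg (by omega)]
    have h3 := (mul_eq_zero.1 h2).resolve_left hG
    rw [← h3, ← Finset.sum_product' (Finset.range K) (Finset.range K)
      (fun c d => u c d * (m.descFactorial c : ℂ) * (n.descFactorial d : ℂ)),
      ← Finset.sum_fiberwise_of_maps_to (s := s') (t := Finset.range K ×ˢ Finset.range K)
      (g := fun i => i.2)]
    · refine Finset.sum_congr rfl fun p _ => ?_
      simp only [u, Finset.sum_mul]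
      refine Finset.sum_congr rfl fun i hi => ?_
      rw [← (Finset.mem_filter.1 hi).2]
    · intro i hi
      have := hK i (Finset.mem_filter.1 hi).1
      simp [this]

/-- index set -/
def T (k : ℕ) : Finset (ℕ × ℕ) :=
  (Finset.range (k + 1)).biUnion Finset.HasAntidiagonal.antidiagonal

lemma mem_T (k : ℕ) (p : ℕ × ℕ) : p ∈ T k ↔ p.1 + p.2 ≤ k := by
  simp [T]
  try omega

lemma card_T (k : ℕ) : 2 * (T k).card = (k + 1) * (k + 2) := by
  rw [T, Finset.card_biUnion]
  · simp only [Finset.Nat.card_antidiagonal]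
    have := Finset.sum_range_id_mul_two (k + 2)
    rw [Finset.sum_range_succ'] at this
    simp at this
    linarith
  · intro i _ j _ hij
    rw [Function.onFun, Finset.disjoint_left]
    intro p hp hp'
    rw [Finset.HasAntidiagonal.mem_antidiagonal] at hp hp'
    exact hij (hp.symm.trans hp')

/-- span of the reduced operators -/
def U (lam : ℂ) (k : ℕ) : Submodule ℂ (Module.End ℂ R2) :=
  Submodule.span ℂ (Set.range fun i : ↥(T k ×ˢ T k) => B lam i.1)

lemma finrank_U (lam : ℂ) (k : ℕ) :
    4 * Module.finrank ℂ (U lam k) = (k + 1) ^ 2 * (k + 2) ^ 2 := by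
  have hli : LinearIndependent ℂ (fun i : ↥(T k ×ˢ T k) => B lam i.1) :=
    (B_indep lam).comp _ Subtype.val_injective
  rw [U, finrank_span_eq_card hli, Fintype.card_coe, Finset.card_product]
  have := card_T k
  calc 4 * ((T k).card * (T k).card) = (2 * (T k).card) * (2 * (T k).card) := by ring
    _ = _ := by rw [this]; ring

/-! ### Spans -/

lemma O_mem_U (lam : ℂ) (k q : ℕ) : ∀ a b c d p : ℕ, a + b + p = c + d + q → c + d + q ≤ k →
    O lam a b c d q ∈ U lam k := by
  have base : ∀ a b c d q, a + b ≤ k → c + d ≤ k → q = a + b - (c + d) →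
      O lam a b c d q ∈ U lam k := by
    rintro a b c d q h1 h2 rfl
    exact Submodule.subset_span ⟨⟨((a, b), (c, d)), by simp [mem_T, h1, h2]⟩, rfl⟩
  induction q with
  | zero =>
    intro a b c d p h hk
    apply base <;> omega
  | succ q ih =>
    intro a b c d p h hk
    rcases p with _ | p
    · apply base <;> omega
    · rw [O_red]
      refine Submodule.sub_mem _ (Submodule.sub_mem _ (Submodule.smul_mem _ _ ?_) ?_) ?_
      · apply ih _ _ _ _ p <;> omega
      · apply ih _ _ _ _ p <;> omega
      · apply ih _ _ _ _ p <;> omega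

abbrev gens (lam : ℂ) : Set (Module.End ℂ R2) :=
  {J1 lam, J2 lam, J3, J4, J5, J6, J7 lam, J8 lam}

lemma Mf_mul (f g : R2) : Mf (f * g) = Mf f * Mf g := by
  apply LinearMap.ext; intro x; simp [Mf]

lemma J1_eq (lam : ℂ) : J1 lam = - (Mf Xv * E0 lam) := by
  rw [J1, E0, pow_two, Mf_mul, Mf_mul, mul_sub, mul_sub, mul_smul_comm, mul_one]
  simp only [mul_assoc]; abel

lemma J2_eq (lam : ℂ) : J2 lam = - (Mf Yv * E0 lam) := by
  rw [J2, E0, pow_two, mul_comm Xv Yv, Mf_mul, Mf_mul, mul_sub, mul_sub, mul_smul_comm, mul_one]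
  simp only [mul_assoc]; abel

lemma J1_mul (lam : ℂ) (X : Module.End ℂ R2) : J1 lam * X = -(Mf Xv * (E0 lam * X)) := by
  rw [J1_eq]; apply LinearMap.ext; intro x; simp [Module.End.mul_apply]

lemma J2_mul (lam : ℂ) (X : Module.End ℂ R2) : J2 lam * X = -(Mf Yv * (E0 lam * X)) := by
  rw [J2_eq]; apply LinearMap.ext; intro x; simp [Module.End.mul_apply]

lemma U_step (lam : ℂ) (k : ℕ) {J X : Module.End ℂ R2} (hJ : J ∈ gens lam) (hX : X ∈ U lam k) :
    J * X ∈ U lam (k + 1) := by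
  -- it suffices to treat `O`
  have key : ∀ a b c d q p, a + b + p = c + d + q → c + d + q ≤ k →
      J * O lam a b c d q ∈ U lam (k + 1) := by
    intro a b c d q p h hk
    have hcoef : ∀ (z : ℕ) (Y : Module.End ℂ R2), (0 < z → Y ∈ U lam (k + 1)) →
        (z : ℂ) • Y ∈ U lam (k + 1) := by
      intro z Y hY
      rcases Nat.eq_zero_or_pos z with rfl | hz
      · simp
      · exact Submodule.smul_mem _ _ (hY hz)
    simp only [gens, Set.mem_insert_iff, Set.mem_singleton_iff] at hJ
    rcases hJ with rfl | rfl | rfl | rfl | rfl | rfl | rfl | rfl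
    · rw [J1_mul, E0_O lam a b c d q p h, mul_add, mul_smul_comm, Mx_O, Mx_O]
      refine Submodule.neg_mem _ (Submodule.add_mem _ ?_ (hcoef _ _ fun hz => ?_))
      · exact O_mem_U _ _ _ _ _ _ _ p (by omega) (by omega)
      · exact O_mem_U _ _ _ _ _ _ _ (p - 1) (by omega) (by omega)
    · rw [J2_mul, E0_O lam a b c d q p h, mul_add, mul_smul_comm, My_O, My_O]
      refine Submodule.neg_mem _ (Submodule.add_mem _ ?_ (hcoef _ _ fun hz => ?_))
      · exact O_mem_U _ _ _ _ _ _ _ p (by omega) (by omega)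
      · exact O_mem_U _ _ _ _ _ _ _ (p - 1) (by omega) (by omega)
    · rw [J3, mul_assoc, Dx_O, mul_add, mul_smul_comm, My_O, My_O]
      refine Submodule.add_mem _ ?_ (hcoef _ _ fun hz => ?_)
      · exact O_mem_U _ _ _ _ _ _ _ p (by omega) (by omega)
      · exact O_mem_U _ _ _ _ _ _ _ p (by omega) (by omega)
    · rw [J4, Dx_O]
      refine Submodule.add_mem _ ?_ (hcoef _ _ fun hz => ?_)
      · exact O_mem_U _ _ _ _ _ _ _ (p + 1) (by omega) (by omega)
      · exact O_mem_U _ _ _ _ _ _ _ (p + 1) (by omega) (by omega)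
    · rw [J5, Dy_O]
      refine Submodule.add_mem _ ?_ (hcoef _ _ fun hz => ?_)
      · exact O_mem_U _ _ _ _ _ _ _ (p + 1) (by omega) (by omega)
      · exact O_mem_U _ _ _ _ _ _ _ (p + 1) (by omega) (by omega)
    · rw [J6, mul_assoc, Dy_O, mul_add, mul_smul_comm, Mx_O, Mx_O]
      refine Submodule.add_mem _ ?_ (hcoef _ _ fun hz => ?_)
      · exact O_mem_U _ _ _ _ _ _ _ p (by omega) (by omega)
      · exact O_mem_U _ _ _ _ _ _ _ p (by omega) (by omega)
    · rw [J7, sub_mul, smul_mul_assoc, one_mul, mul_assoc, Dx_O, mul_add, mul_smul_comm, Mx_O, Mx_O]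
      refine Submodule.sub_mem _ (Submodule.add_mem _ ?_ (hcoef _ _ fun hz => ?_))
        (Submodule.smul_mem _ _ ?_)
      · exact O_mem_U _ _ _ _ _ _ _ p (by omega) (by omega)
      · exact O_mem_U _ _ _ _ _ _ _ p (by omega) (by omega)
      · exact O_mem_U _ _ _ _ _ _ _ p (by omega) (by omega)
    · rw [J8, sub_mul, smul_mul_assoc, one_mul, mul_assoc, Dy_O, mul_add, mul_smul_comm, My_O, My_O]
      refine Submodule.sub_mem _ (Submodule.add_mem _ ?_ (hcoef _ _ fun hz => ?_))
        (Submodule.smul_mem _ _ ?_)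
      · exact O_mem_U _ _ _ _ _ _ _ p (by omega) (by omega)
      · exact O_mem_U _ _ _ _ _ _ _ p (by omega) (by omega)
      · exact O_mem_U _ _ _ _ _ _ _ p (by omega) (by omega)
  refine Submodule.span_induction (p := fun X _ => J * X ∈ U lam (k + 1)) ?_ ?_ ?_ ?_ hX
  · rintro _ ⟨⟨⟨⟨a, b⟩, ⟨c, d⟩⟩, hi⟩, rfl⟩
    simp only [Finset.mem_product, mem_T] at hi
    exact key _ _ _ _ _ (c + d + (a + b - (c + d)) - (a + b)) (by simp only; omega) (by simp only; omega)
  · simp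
  · intro x y _ _ hx hy
    rw [mul_add]; exact Submodule.add_mem _ hx hy
  · intro z x _ hx
    rw [mul_smul_comm]; exact Submodule.smul_mem _ _ hx

lemma U_mono (lam : ℂ) {k l : ℕ} (h : k ≤ l) : U lam k ≤ U lam l := by
  apply Submodule.span_mono
  rintro _ ⟨⟨i, hi⟩, rfl⟩
  refine ⟨⟨i, ?_⟩, rfl⟩
  simp only [Finset.mem_product, mem_T] at hi ⊢
  omega

lemma O_zero (lam : ℂ) : O lam 0 0 0 0 0 = 1 := by
  apply end_ext
  intro m n
  simp [O_mon, G]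

lemma W_le_U (lam : ℂ) (k : ℕ) : Submodule.span ℂ (prodsLE k (gens lam)) ≤ U lam k := by
  rw [Submodule.span_le]
  rintro _ ⟨l, hl, hS, rfl⟩
  refine U_mono lam hl ?_
  clear hl
  induction l with
  | nil =>
    rw [List.prod_nil, ← O_zero lam]
    exact O_mem_U _ _ _ _ _ _ _ 0 (by omega) (by simp)
  | cons J l ih =>
    rw [List.prod_cons, List.length_cons]
    exact U_step lam _ (hS J (by simp)) (ih fun a ha => hS a (by simp [ha]))

abbrev W (lam : ℂ) (k : ℕ) := Submodule.span ℂ (prodsLE k (gens lam))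

lemma W_mono (lam : ℂ) {k l : ℕ} (h : k ≤ l) : W lam k ≤ W lam l := by
  apply Submodule.span_mono
  rintro _ ⟨t, ht, hS, rfl⟩
  exact ⟨t, ht.trans h, hS, rfl⟩

lemma W_one (lam : ℂ) (k : ℕ) : 1 ∈ W lam k :=
  Submodule.subset_span ⟨[], by simp, by simp, rfl⟩

lemma W_step (lam : ℂ) (k : ℕ) {J X : Module.End ℂ R2} (hJ : J ∈ gens lam) (hX : X ∈ W lam k) :
    J * X ∈ W lam (k + 1) := by
  refine Submodule.span_induction (p := fun X _ => J * X ∈ W lam (k + 1)) ?_ ?_ ?_ ?_ hX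
  · rintro _ ⟨t, ht, hS, rfl⟩
    refine Submodule.subset_span ⟨J :: t, by simpa using ht, ?_, by simp⟩
    intro a ha
    rcases List.mem_cons.1 ha with rfl | ha
    · exact hJ
    · exact hS a ha
  · simp
  · intro x y _ _ hx hy
    rw [mul_add]; exact Submodule.add_mem _ hx hy
  · intro z x _ hx
    rw [mul_smul_comm]; exact Submodule.smul_mem _ _ hx

lemma W_xx (lam : ℂ) (k : ℕ) {X : Module.End ℂ R2} (hX : X ∈ W lam k) :
    Mf Xv * (Dx * X) ∈ W lam (k + 1) := by
  have e : Mf Xv * (Dx * X) = J7 lam * X + (lam / 3) • X := by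
    rw [J7, sub_mul, smul_mul_assoc, one_mul, mul_assoc]; abel
  rw [e]
  exact Submodule.add_mem _ (W_step lam k (by simp [gens]) hX)
    (Submodule.smul_mem _ _ (W_mono lam (Nat.le_succ k) hX))

lemma W_yy (lam : ℂ) (k : ℕ) {X : Module.End ℂ R2} (hX : X ∈ W lam k) :
    Mf Yv * (Dy * X) ∈ W lam (k + 1) := by
  have e : Mf Yv * (Dy * X) = J8 lam * X + (lam / 3) • X := by
    rw [J8, sub_mul, smul_mul_assoc, one_mul, mul_assoc]; abel
  rw [e]
  exact Submodule.add_mem _ (W_step lam k (by simp [gens]) hX)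
    (Submodule.smul_mem _ _ (W_mono lam (Nat.le_succ k) hX))

lemma W_zz (lam : ℂ) (k : ℕ) {X : Module.End ℂ R2} (hX : X ∈ W lam k) :
    E0 lam * X ∈ W lam (k + 1) := by
  rw [E0, sub_mul, sub_mul, smul_mul_assoc, one_mul, mul_assoc, mul_assoc]
  exact Submodule.sub_mem _ (Submodule.sub_mem _
    (Submodule.smul_mem _ _ (W_mono lam (Nat.le_succ k) hX)) (W_xx lam k hX)) (W_yy lam k hX)

lemma W_xz (lam : ℂ) (k : ℕ) {X : Module.End ℂ R2} (hX : X ∈ W lam k) :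
    Mf Xv * (E0 lam * X) ∈ W lam (k + 1) := by
  have := W_step lam k (J := J1 lam) (by simp [gens]) hX
  rw [J1_mul] at this
  simpa using Submodule.neg_mem _ this

lemma W_yz (lam : ℂ) (k : ℕ) {X : Module.End ℂ R2} (hX : X ∈ W lam k) :
    Mf Yv * (E0 lam * X) ∈ W lam (k + 1) := by
  have := W_step lam k (J := J2 lam) (by simp [gens]) hX
  rw [J2_mul] at this
  simpa using Submodule.neg_mem _ this

lemma W_yx (lam : ℂ) (k : ℕ) {X : Module.End ℂ R2} (hX : X ∈ W lam k) :
    Mf Yv * (Dx * X) ∈ W lam (k + 1) := by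
  have := W_step lam k (J := J3) (by simp [gens]) hX
  rwa [J3, mul_assoc] at this

lemma W_xy (lam : ℂ) (k : ℕ) {X : Module.End ℂ R2} (hX : X ∈ W lam k) :
    Mf Xv * (Dy * X) ∈ W lam (k + 1) := by
  have := W_step lam k (J := J6) (by simp [gens]) hX
  rwa [J6, mul_assoc] at this

lemma W_zx (lam : ℂ) (k : ℕ) {X : Module.End ℂ R2} (hX : X ∈ W lam k) :
    Dx * X ∈ W lam (k + 1) := W_step lam k (J := J4) (by simp [gens]) hX

lemma W_zy (lam : ℂ) (k : ℕ) {X : Module.End ℂ R2} (hX : X ∈ W lam k) :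
    Dy * X ∈ W lam (k + 1) := W_step lam k (J := J5) (by simp [gens]) hX

lemma O_mem_W (lam : ℂ) (k : ℕ) : ∀ a b p c d q : ℕ, a + b + p = k → c + d + q = k →
    O lam a b c d q ∈ W lam k := by
  induction k with
  | zero =>
    intro a b p c d q h1 h2
    obtain ⟨rfl, rfl, rfl, rfl, rfl⟩ : a = 0 ∧ b = 0 ∧ c = 0 ∧ d = 0 ∧ q = 0 := by omega
    rw [O_zero]; exact W_one lam 0
  | succ k ih =>
    intro a b p c d q h1 h2
    -- extracting the leading term
    have ext1 : ∀ (z : ℕ) (P Q Y : Module.End ℂ R2), P = Q + (z : ℂ) • Y → P ∈ W lam (k + 1) →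
        (0 < z → Y ∈ W lam k) → Q ∈ W lam (k + 1) := by
      intro z P Q Y h hP hY
      have : Q = P - (z : ℂ) • Y := by rw [h]; abel
      rw [this]
      refine Submodule.sub_mem _ hP ?_
      rcases Nat.eq_zero_or_pos z with rfl | hz
      · simp
      · exact Submodule.smul_mem _ _ (W_mono lam (Nat.le_succ k) (hY hz))
    rcases c with _ | c
    · rcases d with _ | d
      · rcases q with _ | q
        · omega
        · rcases a with _ | a
          · rcases b with _ | b
            · obtain ⟨p, rfl⟩ : ∃ p', p = p' + 1 := ⟨p - 1, by omega⟩
              refine ext1 p _ _ _ (E0_O lam 0 0 0 0 q p (by omega))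
                (W_zz lam k (ih _ _ p _ _ _ (by omega) (by omega))) fun hz => ?_
              exact ih _ _ p _ _ _ (by omega) (by omega)
            · refine ext1 p (Mf Yv * (E0 lam * O lam 0 b 0 0 q)) _ (O lam 0 (b + 1) 0 0 q) ?_
                (W_yz lam k (ih _ _ p _ _ _ (by omega) (by omega))) fun hz => ?_
              · rw [E0_O lam 0 b 0 0 q p (by omega), mul_add, mul_smul_comm, My_O, My_O]
              · exact ih _ _ (p - 1) _ _ _ (by omega) (by omega)
          · refine ext1 p (Mf Xv * (E0 lam * O lam a b 0 0 q)) _ (O lam (a + 1) b 0 0 q) ?_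
              (W_xz lam k (ih _ _ p _ _ _ (by omega) (by omega))) fun hz => ?_
            · rw [E0_O lam a b 0 0 q p (by omega), mul_add, mul_smul_comm, Mx_O, Mx_O]
            · exact ih _ _ (p - 1) _ _ _ (by omega) (by omega)
      · rcases a with _ | a
        · rcases b with _ | b
          · obtain ⟨p, rfl⟩ : ∃ p', p = p' + 1 := ⟨p - 1, by omega⟩
            refine ext1 0 _ _ _ (Dy_O lam 0 0 0 d q)
              (W_zy lam k (ih _ _ p _ _ _ (by omega) (by omega))) fun hz => ?_
            omega
          · refine ext1 b (Mf Yv * (Dy * O lam 0 b 0 d q)) _ (O lam 0 (b - 1 + 1) 0 d q) ?_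
              (W_yy lam k (ih _ _ p _ _ _ (by omega) (by omega))) fun hz => ?_
            · rw [Dy_O, mul_add, mul_smul_comm, My_O, My_O]
            · exact ih _ _ p _ _ _ (by omega) (by omega)
        · refine ext1 b (Mf Xv * (Dy * O lam a b 0 d q)) _ (O lam (a + 1) (b - 1) 0 d q) ?_
            (W_xy lam k (ih _ _ p _ _ _ (by omega) (by omega))) fun hz => ?_
          · rw [Dy_O, mul_add, mul_smul_comm, Mx_O, Mx_O]
          · exact ih _ _ p _ _ _ (by omega) (by omega)
    · rcases a with _ | a
      · rcases b with _ | b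
        · obtain ⟨p, rfl⟩ : ∃ p', p = p' + 1 := ⟨p - 1, by omega⟩
          refine ext1 0 _ _ _ (Dx_O lam 0 0 c d q)
            (W_zx lam k (ih _ _ p _ _ _ (by omega) (by omega))) fun hz => ?_
          omega
        · refine ext1 0 (Mf Yv * (Dx * O lam 0 b c d q)) _ (O lam (0 - 1) (b + 1) c d q) ?_
            (W_yx lam k (ih _ _ p _ _ _ (by omega) (by omega))) fun hz => ?_
          · rw [Dx_O, mul_add, mul_smul_comm, My_O, My_O]
          · omega
      · refine ext1 a (Mf Xv * (Dx * O lam a b c d q)) _ (O lam (a - 1 + 1) b c d q) ?_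
          (W_xx lam k (ih _ _ p _ _ _ (by omega) (by omega))) fun hz => ?_
        · rw [Dx_O, mul_add, mul_smul_comm, Mx_O, Mx_O]
        · exact ih _ _ p _ _ _ (by omega) (by omega)

lemma U_le_W (lam : ℂ) (k : ℕ) : U lam k ≤ W lam k := by
  rw [U, Submodule.span_le]
  rintro _ ⟨⟨⟨⟨a, b⟩, ⟨c, d⟩⟩, hi⟩, rfl⟩
  simp only [Finset.mem_product, mem_T] at hi
  refine W_mono lam (k := c + d + (a + b - (c + d))) (by omega) ?_
  exact O_mem_W lam (c + d + (a + b - (c + d))) a b (c + d + (a + b - (c + d)) - (a + b)) c d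
    (a + b - (c + d)) (by omega) (by omega)

end Aux7

theorem stmt7 (lam : ℂ) (k : ℕ) :
    4 * Module.finrank ℂ ↥(Submodule.span ℂ (prodsLE k
      ({J1 lam, J2 lam, J3, J4, J5, J6, J7 lam, J8 lam} : Set (Module.End ℂ R2)))) =
      (k + 1) ^ 2 * (k + 2) ^ 2 := by
  have h : Submodule.span ℂ (prodsLE k
      ({J1 lam, J2 lam, J3, J4, J5, J6, J7 lam, J8 lam} : Set (Module.End ℂ R2)))
      = Aux7.U lam k := le_antisymm (Aux7.W_le_U lam k) (Aux7.U_le_W lam k)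
  rw [h]
  exact Aux7.finrank_U lam k
end
end

section
/- Let n, k ∈ ℕ with k ≤ n. Let f_{ij} ∈ R for 0 ≤ i + j ≤ k, and set T = Σ_{i+j≤k} M_{f_{ij}} ∘ D_x^i ∘ D_y^j. If T preserves 𝒯ₙ, then T lies in the ℂ-linear span of all compositions of at most k elements of {J¹, …, J⁸} (the empty composition being the identity). -/
noncomputable section

open MvPolynomial

/-- The index set `{(i,j) : i + j ≤ k}`. -/
def tIdx (k : ℕ) : Finset (ℕ × ℕ) :=
  (Finset.range (k + 1) ×ˢ Finset.range (k + 1)).filter (fun ij => ij.1 + ij.2 ≤ k)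


namespace S8

/-- normal ordered generator -/
def gen (a b i j : ℕ) : Module.End ℂ R2 := Mf Xv ^ a * Mf Yv ^ b * Dx ^ i * Dy ^ j

lemma Mf_mul (p q : R2) : Mf (p * q) = Mf p * Mf q := by
  refine LinearMap.ext fun r => ?_
  simp [Mf, mul_assoc]

lemma Mf_pow (p : R2) (n : ℕ) : Mf (p ^ n) = Mf p ^ n := by
  induction n with
  | zero =>
    refine LinearMap.ext fun r => ?_
    simp [Mf]
  | succ n ih => rw [pow_succ, pow_succ, Mf_mul, ih]

lemma cXY : Commute (Mf Xv) (Mf Yv) := by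
  rw [Commute, SemiconjBy, ← Mf_mul, ← Mf_mul, mul_comm]

lemma DxX : Dx * Mf Xv = Mf Xv * Dx + 1 := by
  refine LinearMap.ext fun r => ?_
  simp [Mf, Dx, Xv]

lemma DyY : Dy * Mf Yv = Mf Yv * Dy + 1 := by
  refine LinearMap.ext fun r => ?_
  simp [Mf, Dy, Yv]

lemma cDxY : Commute Dx (Mf Yv) := by
  refine LinearMap.ext fun r => ?_
  simp [Mf, Dx, Yv, pderiv_X]

lemma cDyX : Commute Dy (Mf Xv) := by
  refine LinearMap.ext fun r => ?_
  simp [Mf, Dy, Xv, pderiv_X]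

lemma Dx_mono (p q : ℕ) : Dx (Xv ^ p * Yv ^ q) = (p : ℂ) • (Xv ^ (p - 1) * Yv ^ q) := by
  simp [Dx, Xv, Yv, pderiv_X, Derivation.leibniz_pow, smul_eq_C_mul]
  ring

lemma Dy_mono (p q : ℕ) : Dy (Xv ^ p * Yv ^ q) = (q : ℂ) • (Xv ^ p * Yv ^ (q - 1)) := by
  simp [Dy, Xv, Yv, pderiv_X, Derivation.leibniz_pow, smul_eq_C_mul]
  ring

lemma mono_span : Submodule.span ℂ {P : R2 | ∃ a b : ℕ, P = Xv ^ a * Yv ^ b} = ⊤ := by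
  rw [eq_top_iff]
  intro P _
  induction P using MvPolynomial.induction_on' with
  | monomial u c =>
    have : (monomial u c : R2) = c • (Xv ^ (u 0) * Yv ^ (u 1)) := by
      rw [monomial_eq, smul_eq_C_mul, Finsupp.prod_fintype _ _ (by simp)]
      simp [Xv, Yv]
    rw [this]
    exact Submodule.smul_mem _ _ (Submodule.subset_span ⟨_, _, rfl⟩)
  | add p q hp hq => exact Submodule.add_mem _ (hp trivial) (hq trivial)

lemma cDxDy : Commute Dx Dy := by
  have : ∀ P ∈ Submodule.span ℂ {P : R2 | ∃ a b : ℕ, P = Xv ^ a * Yv ^ b},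
      (Dx * Dy) P = (Dy * Dx) P := by
    intro P hP
    induction hP using Submodule.span_induction with
    | mem P h =>
      obtain ⟨a, b, rfl⟩ := h
      simp only [Module.End.mul_apply, Dx_mono, Dy_mono, map_smul, smul_smul, mul_comm]
    | zero => simp
    | add p q _ _ hp hq => rw [map_add, map_add, hp, hq]
    | smul c p _ hp => rw [map_smul, map_smul, hp]
  refine LinearMap.ext fun P => this P ?_
  rw [mono_span]; trivial

lemma DxpowX (i : ℕ) : Dx ^ i * Mf Xv = Mf Xv * Dx ^ i + (i : ℂ) • Dx ^ (i - 1) := by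
  induction i with
  | zero => simp
  | succ i ih =>
    rw [pow_succ', mul_assoc, ih, mul_add, ← mul_assoc, DxX, mul_smul_comm, ← pow_succ']
    rcases i with _ | i
    · simp
    · simp only [Nat.add_sub_cancel, add_mul, one_mul, mul_assoc, ← pow_succ']
      push_cast
      module

lemma DypowY (i : ℕ) : Dy ^ i * Mf Yv = Mf Yv * Dy ^ i + (i : ℂ) • Dy ^ (i - 1) := by
  induction i with
  | zero => simp
  | succ i ih =>
    rw [pow_succ', mul_assoc, ih, mul_add, ← mul_assoc, DyY, mul_smul_comm, ← pow_succ']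
    rcases i with _ | i
    · simp
    · simp only [Nat.add_sub_cancel, add_mul, one_mul, mul_assoc, ← pow_succ']
      push_cast
      module

lemma gen_X (a b i j : ℕ) :
    gen a b i j * Mf Xv = gen (a + 1) b i j + (i : ℂ) • gen a b (i - 1) j := by
  unfold gen
  rw [mul_assoc, (cDyX.pow_left j).eq, ← mul_assoc, mul_assoc _ (Dx ^ i), DxpowX, mul_add, add_mul,
    ← mul_assoc, mul_assoc _ (Mf Yv ^ b), ← (cXY.pow_right b).eq, ← mul_assoc, ← pow_succ]
  simp

lemma gen_Y (a b i j : ℕ) :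
    gen a b i j * Mf Yv = gen a (b + 1) i j + (j : ℂ) • gen a b i (j - 1) := by
  unfold gen
  rw [mul_assoc, DypowY, mul_add, ← mul_assoc, mul_assoc _ (Dx ^ i),  (cDxY.pow_left i).eq,
    ← mul_assoc, mul_assoc _ (Mf Yv ^ b), ← pow_succ]
  simp

lemma gen_Dx (a b i j : ℕ) : gen a b i j * Dx = gen a b (i + 1) j := by
  unfold gen
  rw [mul_assoc, ← (cDxDy.pow_right j).eq, ← mul_assoc, mul_assoc _ (Dx ^ i), ← pow_succ]

lemma gen_Dy (a b i j : ℕ) : gen a b i j * Dy = gen a b i (j + 1) := by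
  unfold gen
  rw [mul_assoc, ← pow_succ]

/-- Euler operator -/
def Eu : Module.End ℂ R2 := Mf Xv * Dx + Mf Yv * Dy

lemma Eu_X : Eu * Mf Xv = Mf Xv * Eu + Mf Xv := by
  have h := cDyX.eq
  have h' := cXY.eq
  unfold Eu
  rw [add_mul, mul_assoc, DxX, mul_assoc, h, ← mul_assoc, ← h']
  noncomm_ring

lemma Eu_Y : Eu * Mf Yv = Mf Yv * Eu + Mf Yv := by
  have h := cDxY.eq
  have h' := cXY.eq
  unfold Eu
  rw [add_mul, mul_assoc, h, mul_assoc, DyY, ← mul_assoc, h']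
  noncomm_ring

lemma Eu_mono (p q : ℕ) : Eu (Xv ^ p * Yv ^ q) = ((p + q : ℕ) : ℂ) • (Xv ^ p * Yv ^ q) := by
  simp only [Eu, LinearMap.add_apply, Module.End.mul_apply, Dx_mono, Dy_mono, map_smul]
  simp only [Mf, LinearMap.mulLeft_apply]
  have h1 : (p : ℂ) • (Xv * (Xv ^ (p - 1) * Yv ^ q)) = (p : ℂ) • (Xv ^ p * Yv ^ q) := by
    rcases p with _ | p
    · simp
    · congr 1; rw [Nat.add_sub_cancel]; ring
  have h2 : (q : ℂ) • (Yv * (Xv ^ p * Yv ^ (q - 1))) = (q : ℂ) • (Xv ^ p * Yv ^ q) := by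
    rcases q with _ | q
    · simp
    · congr 1; rw [Nat.add_sub_cancel]; ring
  rw [h1, h2, ← add_smul]; push_cast; rfl

lemma gen_Eu (a b i j : ℕ) : gen a b i j * Eu =
    gen (a + 1) b (i + 1) j + gen a (b + 1) i (j + 1) + ((i + j : ℕ) : ℂ) • gen a b i j := by
  have h1 : (i : ℂ) • gen a b (i - 1 + 1) j = (i : ℂ) • gen a b i j := by
    rcases i with _ | i <;> simp
  have h2 : (j : ℂ) • gen a b i (j - 1 + 1) = (j : ℂ) • gen a b i j := by
    rcases j with _ | j <;> simp
  rw [Eu, mul_add, ← mul_assoc, ← mul_assoc, gen_X, gen_Y, add_mul, add_mul, smul_mul_assoc,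
    smul_mul_assoc, gen_Dx, gen_Dx, gen_Dy, gen_Dy, h1, h2]
  push_cast
  module

/-- `Pe n e = ∏_{t<e} (Eu - n + t)` -/
def Pe (n : ℂ) : ℕ → Module.End ℂ R2
  | 0 => 1
  | e + 1 => (Eu - (n - e) • 1) * Pe n e

lemma J1_eq (n : ℂ) : J1 n = Mf Xv * (Eu - n • 1) := by
  simp only [J1, Eu, Mf_mul, pow_two, mul_sub, mul_add, mul_assoc, mul_smul_comm, mul_one]

lemma J2_eq (n : ℂ) : J2 n = Mf Yv * (Eu - n • 1) := by
  simp only [J2, Eu, Mf_mul, pow_two, mul_sub, mul_add, mul_assoc, mul_smul_comm, mul_one]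
  rw [← mul_assoc, cXY.eq, mul_assoc]

lemma Pe_J1 (n : ℂ) (d : ℕ) : Pe n d * J1 n = Mf Xv * Pe n (d + 1) := by
  induction d with
  | zero => simp [Pe, J1_eq]
  | succ d ih =>
    have : (Eu - (n - d) • 1) * Mf Xv = Mf Xv * (Eu - (n - (d + 1 : ℕ)) • 1) := by
      rw [sub_mul, Eu_X, mul_sub]
      simp only [smul_mul_assoc, mul_smul_comm, one_mul, mul_one]
      push_cast
      module
    rw [Pe, mul_assoc, ih, ← mul_assoc, this, mul_assoc]; rfl

lemma Pe_J2 (n : ℂ) (d : ℕ) : Pe n d * J2 n = Mf Yv * Pe n (d + 1) := by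
  induction d with
  | zero => simp [Pe, J2_eq]
  | succ d ih =>
    have : (Eu - (n - d) • 1) * Mf Yv = Mf Yv * (Eu - (n - (d + 1 : ℕ)) • 1) := by
      rw [sub_mul, Eu_Y, mul_sub]
      simp only [smul_mul_assoc, mul_smul_comm, one_mul, mul_one]
      push_cast
      module
    rw [Pe, mul_assoc, ih, ← mul_assoc, this, mul_assoc]; rfl

lemma Pe_mono (n : ℂ) (e p q : ℕ) : Pe n e (Xv ^ p * Yv ^ q) =
    (∏ t ∈ Finset.range e, (((p + q : ℕ) : ℂ) - (n - t))) • (Xv ^ p * Yv ^ q) := by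
  induction e with
  | zero => simp [Pe]
  | succ e ih =>
    rw [Pe, Module.End.mul_apply, ih, map_smul, LinearMap.sub_apply, Eu_mono,
      Finset.prod_range_succ, mul_smul]
    simp only [LinearMap.smul_apply, Module.End.one_apply]
    rw [← sub_smul]

/-- the generators -/
def Js (n : ℂ) : Set (Module.End ℂ R2) := {J1 n, J2 n, J3, J4, J5, J6, J7 n, J8 n}

/-- the filtered span -/
def V (n : ℂ) (k : ℕ) : Submodule ℂ (Module.End ℂ R2) := Submodule.span ℂ (prodsLE k (Js n))

lemma V_mono (n : ℂ) {k l : ℕ} (h : k ≤ l) : V n k ≤ V n l :=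
  Submodule.span_mono fun _ ⟨L, h1, h2, h3⟩ => ⟨L, h1.trans h, h2, h3⟩

lemma V_one (n : ℂ) (k : ℕ) : 1 ∈ V n k :=
  Submodule.subset_span ⟨[], by simp, by simp, by simp⟩

lemma V_mul (n : ℂ) {k : ℕ} {A J : Module.End ℂ R2} (hA : A ∈ V n k) (hJ : J ∈ Js n) :
    A * J ∈ V n (k + 1) := by
  unfold V at hA
  induction hA using Submodule.span_induction with
  | mem A h =>
    obtain ⟨L, h1, h2, rfl⟩ := h
    refine Submodule.subset_span ⟨L ++ [J], by simpa using h1, ?_, by simp⟩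
    intro a ha
    rcases List.mem_append.1 ha with h | h
    · exact h2 a h
    · rw [List.mem_singleton.1 h]; exact hJ
  | zero => simp
  | add p q _ _ hp hq => rw [add_mul]; exact add_mem hp hq
  | smul c p _ hp => rw [smul_mul_assoc]; exact Submodule.smul_mem _ _ hp

lemma V_mul7 (n : ℂ) {k : ℕ} {A : Module.End ℂ R2} (hA : A ∈ V n k) :
    A * (Mf Xv * Dx) ∈ V n (k + 1) := by
  have : A * (Mf Xv * Dx) = A * J7 n + (n / 3) • A := by
    simp [J7, mul_sub]
  rw [this]
  exact add_mem (V_mul n hA (by simp [Js])) (Submodule.smul_mem _ _ (V_mono n (Nat.le_succ k) hA))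

lemma V_mul8 (n : ℂ) {k : ℕ} {A : Module.End ℂ R2} (hA : A ∈ V n k) :
    A * (Mf Yv * Dy) ∈ V n (k + 1) := by
  have : A * (Mf Yv * Dy) = A * J8 n + (n / 3) • A := by
    simp [J8, mul_sub]
  rw [this]
  exact add_mem (V_mul n hA (by simp [Js])) (Submodule.smul_mem _ _ (V_mono n (Nat.le_succ k) hA))

/-- non-raising normal ordered operators lie in the filtered span -/
lemma gen_mem_V (n : ℂ) (r : ℕ) : ∀ a b i j : ℕ, i + j = r → a + b ≤ r → gen a b i j ∈ V n r := by
  induction r with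
  | zero =>
    intro a b i j h1 h2
    obtain ⟨rfl, rfl⟩ : i = 0 ∧ j = 0 := by omega
    obtain ⟨rfl, rfl⟩ : a = 0 ∧ b = 0 := by omega
    simpa [gen] using V_one n 0
  | succ r ih =>
    intro a b i j h1 h2
    have hs := fun {A} (h : A ∈ V n r) => V_mono n (Nat.le_succ r) h
    rcases i with _ | i
    · obtain rfl : j = r + 1 := by omega
      rcases a with _ | a
      · rcases b with _ | b
        · rw [← gen_Dy]
          exact V_mul n (ih _ _ _ _ (by omega) (by omega)) (by simp [Js, J5])
        · have h := ih 0 b 0 r (by omega) (by omega)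
          have e := gen_Y 0 b 0 r
          have := V_mul8 n h
          rw [← mul_assoc, e, add_mul, gen_Dy, smul_mul_assoc] at this
          refine (Submodule.add_mem_iff_left _ ?_).1 this
          rcases r with _ | r
          · simp
          · rw [gen_Dy]; exact Submodule.smul_mem _ _ (hs h)
      · have h := ih a b 0 r (by omega) (by omega)
        have := V_mul n h (J := J6) (by simp [Js])
        rw [J6, ← mul_assoc, gen_X, add_mul, gen_Dy, smul_mul_assoc] at this
        simpa using this
    · rcases a with _ | a
      · rcases b with _ | b
        · rw [← gen_Dx]
          exact V_mul n (ih _ _ _ _ (by omega) (by omega)) (by simp [Js, J4])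
        · have h := ih 0 b i j (by omega) (by omega)
          have := V_mul n h (J := J3) (by simp [Js])
          rw [J3, ← mul_assoc, gen_Y, add_mul, gen_Dx, smul_mul_assoc] at this
          refine (Submodule.add_mem_iff_left _ ?_).1 this
          rcases j with _ | j
          · simp
          · rw [gen_Dx]; exact Submodule.smul_mem _ _ (hs (ih _ _ _ _ (by omega) (by omega)))
      · have h := ih a b i j (by omega) (by omega)
        have := V_mul7 n h
        rw [← mul_assoc, gen_X, add_mul, gen_Dx, smul_mul_assoc] at this
        refine (Submodule.add_mem_iff_left _ ?_).1 this
        rcases i with _ | i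
        · simp
        · rw [gen_Dx]; exact Submodule.smul_mem _ _ (hs h)

lemma gen_Pe_mem_V (n : ℂ) (d : ℕ) : ∀ r a b i j : ℕ, i + j = r → a + b = r + d →
    gen a b i j * Pe n d ∈ V n (r + d) := by
  induction d with
  | zero =>
    intro r a b i j h1 h2
    simpa [Pe] using gen_mem_V n r a b i j h1 (by omega)
  | succ d ihd =>
    intro r
    induction r with
    | zero =>
      intro a b i j h1 h2
      obtain ⟨rfl, rfl⟩ : i = 0 ∧ j = 0 := by omega
      rcases a with _ | a
      · obtain rfl : b = d + 1 := by omega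
        have := V_mul n (ihd 0 0 d 0 0 rfl (by omega)) (J := J2 n) (by simp [Js])
        rw [mul_assoc, Pe_J2, ← mul_assoc, gen_Y] at this
        simpa using this
      · have := V_mul n (ihd 0 a b 0 0 rfl (by omega)) (J := J1 n) (by simp [Js])
        rw [mul_assoc, Pe_J1, ← mul_assoc, gen_X] at this
        simpa using this
    | succ r ihr =>
      intro a b i j h1 h2
      rcases a with _ | a
      · rcases b with _ | b
        · omega
        have := V_mul n (ihd (r + 1) 0 b i j (by omega) (by omega)) (J := J2 n) (by simp [Js])
        rw [mul_assoc, Pe_J2, ← mul_assoc, gen_Y, add_mul, smul_mul_assoc] at this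
        refine (Submodule.add_mem_iff_left _ ?_).1 this
        rcases j with _ | j
        · simp
        · exact Submodule.smul_mem _ _
            (V_mono n (by omega) (ihr _ _ _ _ (by omega) (by omega)))
      · have := V_mul n (ihd (r + 1) a b i j (by omega) (by omega)) (J := J1 n) (by simp [Js])
        rw [mul_assoc, Pe_J1, ← mul_assoc, gen_X, add_mul, smul_mul_assoc] at this
        refine (Submodule.add_mem_iff_left _ ?_).1 this
        rcases i with _ | i
        · simp
        · exact Submodule.smul_mem _ _
            (V_mono n (by omega) (ihr _ _ _ _ (by omega) (by omega)))

/-- operators of order `< k`, raising the degree by exactly `d` -/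
def O (k d : ℕ) : Submodule ℂ (Module.End ℂ R2) :=
  Submodule.span ℂ {A | ∃ a b i j : ℕ, i + j < k ∧ a + b = i + j + d ∧ A = gen a b i j}

lemma O_zero (d : ℕ) {A : Module.End ℂ R2} (h : A ∈ O 0 d) : A = 0 := by
  have : {A | ∃ a b i j : ℕ, i + j < 0 ∧ a + b = i + j + d ∧ A = gen a b i j} = ∅ := by
    ext; simp
  rw [O, this, Submodule.span_empty] at h
  simpa using h

lemma O_mul_Pe (n : ℂ) {k l d : ℕ} (h : ∀ r, r < l → r + d ≤ k) {A : Module.End ℂ R2}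
    (hA : A ∈ O l d) : A * Pe n d ∈ V n k := by
  unfold O at hA
  induction hA using Submodule.span_induction with
  | mem A hA =>
    obtain ⟨a, b, i, j, h1, h2, rfl⟩ := hA
    exact V_mono n (h _ h1) (gen_Pe_mem_V n d (i + j) a b i j rfl h2)
  | zero => simp
  | add p q _ _ hp hq => rw [add_mul]; exact add_mem hp hq
  | smul c p _ hp => rw [smul_mul_assoc]; exact Submodule.smul_mem _ _ hp

/-- top order operators with polynomial coefficients -/
def topOp (k : ℕ) (g : ℕ → R2) : Module.End ℂ R2 :=
  ∑ i ∈ Finset.range (k + 1), Mf (g i) * Dx ^ i * Dy ^ (k - i)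

lemma Dx_pow_mono (i p q : ℕ) : (Dx ^ i) (Xv ^ p * Yv ^ q) =
    (p.descFactorial i : ℂ) • (Xv ^ (p - i) * Yv ^ q) := by
  induction i with
  | zero => simp
  | succ i ih =>
    rw [pow_succ', Module.End.mul_apply, ih, map_smul, Dx_mono, smul_smul,
      Nat.descFactorial_succ, Nat.sub_sub]
    push_cast
    rw [mul_comm]

lemma Dy_pow_mono (i p q : ℕ) : (Dy ^ i) (Xv ^ p * Yv ^ q) =
    (q.descFactorial i : ℂ) • (Xv ^ p * Yv ^ (q - i)) := by
  induction i with
  | zero => simp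
  | succ i ih =>
    rw [pow_succ', Module.End.mul_apply, ih, map_smul, Dy_mono, smul_smul,
      Nat.descFactorial_succ, Nat.sub_sub]
    push_cast
    rw [mul_comm]

lemma op_mono (g : R2) (i j p q : ℕ) : (Mf g * Dx ^ i * Dy ^ j) (Xv ^ p * Yv ^ q) =
    ((p.descFactorial i : ℂ) * (q.descFactorial j : ℂ)) •
      (g * (Xv ^ (p - i) * Yv ^ (q - j))) := by
  rw [Module.End.mul_apply, Dy_pow_mono, map_smul, Module.End.mul_apply, Dx_pow_mono, map_smul,
    smul_smul, mul_comm]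
  rfl

lemma gen_eq (a b i j : ℕ) : gen a b i j = Mf (Xv ^ a * Yv ^ b) * Dx ^ i * Dy ^ j := by
  rw [gen, Mf_mul, Mf_pow, Mf_pow]

lemma topOp_eq_zero {n k : ℕ} (hk : k ≤ n) (g : ℕ → R2)
    (h : ∀ p q, p + q = n → topOp k g (Xv ^ p * Yv ^ q) = 0) : topOp k g = 0 := by
  have key : ∀ i, i ≤ k → g i = 0 := by
    intro i
    induction i using Nat.strong_induction_on with
    | _ i ih =>
      intro hi
      have h1 := h i (n - i) (by omega)
      rw [topOp, LinearMap.sum_apply, Finset.sum_eq_single i] at h1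
      · rw [op_mono] at h1
        rw [smul_eq_zero] at h1
        rcases h1 with h1 | h1
        · exfalso
          rw [mul_eq_zero] at h1
          rcases h1 with h1 | h1 <;>
          · rw [Nat.cast_eq_zero, Nat.descFactorial_eq_zero_iff_lt] at h1
            omega
        · rcases mul_eq_zero.1 h1 with h1 | h1
          · exact h1
          · exfalso
            rcases mul_eq_zero.1 h1 with h1 | h1
            · exact X_ne_zero _ (eq_zero_of_pow_eq_zero h1)
            · exact X_ne_zero _ (eq_zero_of_pow_eq_zero h1)
      · intro j hj hji
        rw [op_mono]
        rcases lt_or_gt_of_ne hji with hlt | hgt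
        · rw [ih j hlt (by omega)]; simp
        · rw [Nat.descFactorial_eq_zero_iff_lt.2 hgt]; simp
      · intro hh
        exact absurd (Finset.mem_range.2 (by omega)) hh
  refine Finset.sum_eq_zero fun i hi => ?_
  rw [key i (by simpa [Nat.lt_succ_iff] using hi)]
  simp [Mf]

/-- Reduction of an operator of order `≤ k` to top order modulo the left ideal of `Eu - n`. -/
lemma reduce_gen {n k d : ℕ} (hk : k ≤ n) (s : ℕ) : ∀ a b i j : ℕ, i + j + s = k →
    a + b = i + j + d →
    ∃ g : ℕ → R2, ∃ B ∈ O k d, gen a b i j = topOp k g + B * (Eu - (n : ℂ) • 1) := by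
  induction s with
  | zero =>
    intro a b i j h1 h2
    refine ⟨Pi.single i (Xv ^ a * Yv ^ b), 0, zero_mem _, ?_⟩
    rw [topOp, Finset.sum_eq_single i, gen_eq]
    · simp [show k - i = j by omega]
    · intro i' _ h; simp [h, Mf]
    · intro hh; exact absurd (Finset.mem_range.2 (by omega)) hh
  | succ s ih =>
    intro a b i j h1 h2
    obtain ⟨g1, B1, hB1, e1⟩ := ih (a + 1) b (i + 1) j (by omega) (by omega)
    obtain ⟨g2, B2, hB2, e2⟩ := ih a (b + 1) i (j + 1) (by omega) (by omega)
    have hB : gen a b i j ∈ O k d :=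
      Submodule.subset_span ⟨a, b, i, j, by omega, h2, rfl⟩
    have hne : (n : ℂ) - ((i + j : ℕ) : ℂ) ≠ 0 := by
      rw [sub_ne_zero]; exact_mod_cast (by omega : n ≠ i + j)
    set c : ℂ := (n : ℂ) - ((i + j : ℕ) : ℂ) with hc
    refine ⟨c⁻¹ • (g1 + g2), c⁻¹ • (B1 + B2 - gen a b i j),
      Submodule.smul_mem _ _ (sub_mem (add_mem hB1 hB2) hB), ?_⟩
    have et : topOp k (c⁻¹ • (g1 + g2)) = c⁻¹ • (topOp k g1 + topOp k g2) := by
      have : ∀ i, Mf ((c⁻¹ • (g1 + g2)) i) = c⁻¹ • (Mf (g1 i) + Mf (g2 i)) := by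
        intro i
        refine LinearMap.ext fun r => ?_
        simp [Mf, add_mul]
      simp only [topOp, this, smul_mul_assoc, add_mul, ← Finset.smul_sum, Finset.sum_add_distrib]
    have e3 := gen_Eu a b i j
    rw [e1, e2] at e3
    have : c • gen a b i j = topOp k g1 + topOp k g2
        + (B1 + B2 - gen a b i j) * (Eu - (n : ℂ) • 1) := by
      have e4 : gen a b i j * (Eu - (n : ℂ) • 1) = gen a b i j * Eu - (n : ℂ) • gen a b i j := by
        simp [mul_sub]
      rw [sub_mul, e4, e3, add_mul, hc]
      module
    rw [et, smul_mul_assoc, ← smul_add, ← this, smul_smul, inv_mul_cancel₀ hne, one_smul]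

lemma topOp_add (k : ℕ) (g h : ℕ → R2) : topOp k (g + h) = topOp k g + topOp k h := by
  have : ∀ i, Mf ((g + h) i) = Mf (g i) + Mf (h i) := by
    intro i
    refine LinearMap.ext fun r => ?_
    simp [Mf, add_mul]
  simp only [topOp, this, add_mul, Finset.sum_add_distrib]

lemma topOp_smul (k : ℕ) (c : ℂ) (g : ℕ → R2) : topOp k (c • g) = c • topOp k g := by
  have : ∀ i, Mf ((c • g) i) = c • Mf (g i) := by
    intro i
    refine LinearMap.ext fun r => ?_
    simp [Mf]
  simp only [topOp, this, smul_mul_assoc, Finset.smul_sum]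

lemma reduce {n k d : ℕ} (hk : k ≤ n) {A : Module.End ℂ R2} (hA : A ∈ O (k + 1) d) :
    ∃ g : ℕ → R2, ∃ B ∈ O k d, A = topOp k g + B * (Eu - (n : ℂ) • 1) := by
  unfold O at hA
  induction hA using Submodule.span_induction with
  | mem A hA =>
    obtain ⟨a, b, i, j, h1, h2, rfl⟩ := hA
    exact reduce_gen hk (k - (i + j)) a b i j (by omega) h2
  | zero => exact ⟨0, 0, zero_mem _, by simp [topOp, Mf]⟩
  | add p q _ _ hp hq =>
    obtain ⟨g1, B1, h1, rfl⟩ := hp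
    obtain ⟨g2, B2, h2, rfl⟩ := hq
    exact ⟨g1 + g2, B1 + B2, add_mem h1 h2, by rw [topOp_add, add_mul]; abel⟩
  | smul c p _ hp =>
    obtain ⟨g1, B1, h1, rfl⟩ := hp
    exact ⟨c • g1, c • B1, Submodule.smul_mem _ _ h1, by
      rw [topOp_smul, smul_mul_assoc, smul_add]⟩

lemma divide {n k d : ℕ} (hk : k ≤ n) {A : Module.End ℂ R2} (hA : A ∈ O (k + 1) d)
    (h : ∀ p q, p + q = n → A (Xv ^ p * Yv ^ q) = 0) :
    ∃ B ∈ O k d, A = B * (Eu - (n : ℂ) • 1) := by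
  obtain ⟨g, B, hB, rfl⟩ := reduce hk hA
  refine ⟨B, hB, ?_⟩
  rw [topOp_eq_zero hk g, zero_add]
  intro p q hpq
  have := h p q hpq
  rw [LinearMap.add_apply, Module.End.mul_apply, LinearMap.sub_apply, Eu_mono, hpq] at this
  simpa using this

lemma divide_iter {n k d : ℕ} (hk : k ≤ n) {A : Module.End ℂ R2} (hA : A ∈ O (k + 1) d) (e : ℕ)
    (h : ∀ p q, p + q ≤ n → n < p + q + e → A (Xv ^ p * Yv ^ q) = 0) :
    ∃ B ∈ O (k + 1 - e) d, A = B * Pe n e := by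
  induction e with
  | zero => exact ⟨A, hA, by simp [Pe]⟩
  | succ e ih =>
    obtain ⟨B, hB, rfl⟩ := ih fun p q h1 h2 => h p q h1 (by omega)
    by_cases hek : e ≤ k
    · have hB' : B ∈ O (k - e + 1) d := by
        rwa [show k - e + 1 = k + 1 - e by omega]
      obtain ⟨C, hC, rfl⟩ := divide (n := n - e) (by omega) hB' (by
        intro p q hpq
        have := h p q (by omega) (by omega)
        rw [Module.End.mul_apply, Pe_mono, map_smul, smul_eq_zero] at this
        refine this.resolve_left ?_
        refine Finset.prod_ne_zero_iff.2 ?_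
        intro t ht
        have ht := Finset.mem_range.1 ht
        rw [sub_ne_zero]
        intro hh
        have : (((p + q + t : ℕ)) : ℂ) = (n : ℂ) := by
          push_cast at hh ⊢
          rw [hh]; ring
        have := Nat.cast_injective (R := ℂ) this
        omega)
      refine ⟨C, by rwa [show k + 1 - (e + 1) = k - e by omega], ?_⟩
      rw [Pe, mul_assoc, Nat.cast_sub (by omega)]
    · rw [show k + 1 - e = 0 by omega] at hB
      rw [O_zero d hB]
      exact ⟨0, zero_mem _, by simp⟩

lemma mem_V_of_kills {n k d : ℕ} (hk : k ≤ n) {A : Module.End ℂ R2} (hA : A ∈ O (k + 1) d)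
    (h : ∀ p q, p + q ≤ n → n < p + q + d → A (Xv ^ p * Yv ^ q) = 0) : A ∈ V n k := by
  obtain ⟨B, hB, rfl⟩ := divide_iter hk hA d h
  exact O_mul_Pe n (fun r hr => by omega) hB

lemma hom_mono (p q : ℕ) : (Xv ^ p * Yv ^ q).IsHomogeneous (p + q) := by
  simpa [Xv, Yv] using ((isHomogeneous_X ℂ (0 : Fin 2)).pow p).mul ((isHomogeneous_X ℂ (1 : Fin 2)).pow q)

lemma gen_comp_zero {a b i j p q e : ℕ} (h : e + (i + j) ≠ p + q + (a + b)) :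
    homogeneousComponent e (gen a b i j (Xv ^ p * Yv ^ q)) = 0 := by
  rw [gen_eq, op_mono, map_smul]
  by_cases hi : p < i
  · rw [Nat.descFactorial_eq_zero_iff_lt.2 hi]; simp
  by_cases hj : q < j
  · rw [Nat.descFactorial_eq_zero_iff_lt.2 hj]; simp
  have := (hom_mono a b).mul (hom_mono (p - i) (q - j))
  rw [homogeneousComponent_of_mem this, if_neg (by omega), smul_zero]

/-- non-raising operators of order at most `k` -/
def N (k : ℕ) : Submodule ℂ (Module.End ℂ R2) :=
  Submodule.span ℂ {A | ∃ a b i j : ℕ, i + j < k + 1 ∧ a + b ≤ i + j ∧ A = gen a b i j}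

lemma N_le_V (n : ℂ) (k : ℕ) : N k ≤ V n k := by
  refine Submodule.span_le.2 ?_
  rintro _ ⟨a, b, i, j, h1, h2, rfl⟩
  exact V_mono n (by omega) (gen_mem_V n (i + j) a b i j rfl h2)

lemma N_comp {k p q e : ℕ} (h : p + q < e) {A : Module.End ℂ R2} (hA : A ∈ N k) :
    homogeneousComponent e (A (Xv ^ p * Yv ^ q)) = 0 := by
  unfold N at hA
  induction hA using Submodule.span_induction with
  | mem A hA =>
    obtain ⟨a, b, i, j, h1, h2, rfl⟩ := hA
    exact gen_comp_zero (by omega)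
  | zero => simp
  | add p q _ _ hp hq => rw [LinearMap.add_apply, map_add, hp, hq, add_zero]
  | smul c p _ hp => rw [LinearMap.smul_apply, map_smul, hp, smul_zero]

lemma O_hom {k d p q : ℕ} {A : Module.End ℂ R2} (hA : A ∈ O k d) :
    (∀ e, e ≠ p + q + d → homogeneousComponent e (A (Xv ^ p * Yv ^ q)) = 0) := by
  intro e he
  unfold O at hA
  induction hA using Submodule.span_induction with
  | mem A hA =>
    obtain ⟨a, b, i, j, h1, h2, rfl⟩ := hA
    exact gen_comp_zero (by omega)
  | zero => simp
  | add p q _ _ hp hq => rw [LinearMap.add_apply, map_add, hp, hq, add_zero]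
  | smul c p _ hp => rw [LinearMap.smul_apply, map_smul, hp, smul_zero]

lemma eq_zero_of_comp (P : R2) (h : ∀ e, homogeneousComponent e P = 0) : P = 0 := by
  rw [← sum_homogeneousComponent P]
  exact Finset.sum_eq_zero fun i _ => h i

lemma Tmod_comp {n e : ℕ} (h : n < e) {P : R2} (hP : P ∈ Tmod n) :
    homogeneousComponent e P = 0 := by
  unfold Tmod at hP
  induction hP using Submodule.span_induction with
  | mem A hA =>
    obtain ⟨i, j, h1, rfl⟩ := hA
    rw [homogeneousComponent_of_mem (hom_mono i j), if_neg (by omega)]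
  | zero => simp
  | add p q _ _ hp hq => rw [map_add, hp, hq, add_zero]
  | smul c p _ hp => rw [map_smul, hp, smul_zero]

lemma op_mem {k i j : ℕ} (h : i + j < k + 1) (g : R2) :
    Mf g * Dx ^ i * Dy ^ j ∈ N k ⊔ ⨆ d : ℕ, O (k + 1) (d + 1) := by
  have hg : g ∈ Submodule.span ℂ {P : R2 | ∃ a b : ℕ, P = Xv ^ a * Yv ^ b} := by
    rw [mono_span]; trivial
  induction hg using Submodule.span_induction with
  | mem g hg =>
    obtain ⟨a, b, rfl⟩ := hg
    rw [← gen_eq]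
    by_cases hab : a + b ≤ i + j
    · exact Submodule.mem_sup_left (Submodule.subset_span ⟨a, b, i, j, h, hab, rfl⟩)
    · refine Submodule.mem_sup_right (Submodule.mem_iSup_of_mem (a + b - (i + j) - 1) ?_)
      exact Submodule.subset_span ⟨a, b, i, j, h, by omega, rfl⟩
  | zero =>
    have : Mf 0 = 0 := by simp [Mf]
    simp [this]
  | add p q _ _ hp hq =>
    have : Mf (p + q) = Mf p + Mf q := LinearMap.ext fun r => by simp [Mf, add_mul]
    rw [this, add_mul, add_mul]; exact add_mem hp hq
  | smul c p _ hp =>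
    have : Mf (c • p) = c • Mf p := LinearMap.ext fun r => by simp [Mf]
    rw [this, smul_mul_assoc, smul_mul_assoc]; exact Submodule.smul_mem _ _ hp

end S8

theorem stmt8 (n k : ℕ) (hk : k ≤ n) (f : ℕ × ℕ → R2) (T : Module.End ℂ R2)
    (hT : T = ∑ ij ∈ tIdx k, Mf (f ij) * Dx ^ ij.1 * Dy ^ ij.2)
    (hpres : ∀ P ∈ Tmod n, T P ∈ Tmod n) :
    T ∈ Submodule.span ℂ (prodsLE k
      ({J1 n, J2 n, J3, J4, J5, J6, J7 n, J8 n} : Set (Module.End ℂ R2))) := by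
  change T ∈ S8.V n k
  have hmem : T ∈ S8.N k ⊔ ⨆ d : ℕ, S8.O (k + 1) (d + 1) := by
    rw [hT]
    refine Submodule.sum_mem _ fun ij hij => ?_
    have h := (Finset.mem_filter.1 hij).2
    exact S8.op_mem (Nat.lt_succ_of_le h) _
  obtain ⟨T0, hT0, T1, hT1, hsum⟩ := Submodule.mem_sup.1 hmem
  obtain ⟨t, ht, rfl⟩ := (Submodule.mem_iSup_iff_exists_finsupp _ _).1 hT1
  rw [← hsum]
  refine add_mem (S8.N_le_V n k hT0) (Submodule.sum_mem _ fun d hd => ?_)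
  refine S8.mem_V_of_kills hk (ht d) fun p q h1 h2 => ?_
  refine S8.eq_zero_of_comp _ fun e => ?_
  by_cases he : e = p + q + (d + 1)
  · have h3 := S8.Tmod_comp (e := e) (by omega)
      (hpres (Xv ^ p * Yv ^ q) (Submodule.subset_span ⟨p, q, h1, rfl⟩))
    rw [← hsum, LinearMap.add_apply, map_add, S8.N_comp (by omega) hT0, zero_add, Finsupp.sum,
      LinearMap.sum_apply, map_sum, Finset.sum_eq_single d] at h3
    · exact h3
    · intro d' _ hd'
      exact S8.O_hom (ht d') e (by omega)
    · intro h; exact absurd hd h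
  · exact S8.O_hom (ht d) e he
end
end

section
/- Let p = 2, q = 1, r = 2, and set T = M_{x⁴} ∘ D_x ∘ D_x − 2·M_{x³} ∘ D_x − 2·M_{x²y} ∘ D_y + 2·M_{x²} (an endomorphism of R). Then T preserves 𝒮²_{2,1} (the ℂ-span of {1, x, x², y}), but T is not an element of the unital ℂ-subalgebra of End(R) generated by {W¹, W², W³, W⁴, W⁵, W⁶, W⁷} (with parameter p = 2); that is, T cannot be written as a polynomial in the generators of 𝔤^{24,2}_2. -/
noncomputable section

open MvPolynomial

/-- `W¹ = D_x`. -/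
def W1 : Module.End ℂ R2 := Dx

/-- `W² = M_{x²}∘D_x + r·M_{xy}∘D_y − p·M_x`. -/
def W2 (r p : ℕ) : Module.End ℂ R2 :=
  Mf (Xv ^ 2) * Dx + (r : ℂ) • (Mf (Xv * Yv) * Dy) - (p : ℂ) • Mf Xv

/-- `W³ = M_x∘D_x − (p/2)·id`. -/
def W3 (p : ℕ) : Module.End ℂ R2 := Mf Xv * Dx - ((p : ℂ) / 2) • 1

/-- `W⁴ = M_y∘D_y`. -/
def W4 : Module.End ℂ R2 := Mf Yv * Dy

/-- `W^{5+i} = M_{xⁱ}∘D_y`. -/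
def W5i (i : ℕ) : Module.End ℂ R2 := Mf (Xv ^ i) * Dy

/-- The generating set `{W¹, …, W^{5+r}}` of the realization `𝔤^{24,r}_p`. -/
def Wset (r p : ℕ) : Set (Module.End ℂ R2) :=
  {W1, W2 r p, W3 p, W4} ∪ {T | ∃ i ≤ r, T = W5i i}

theorem W2_mono (a b : ℕ) : W2 2 2 (Xv ^ a * Yv ^ b) =
    ((a : ℂ) + 2 * b - 2) • (Xv ^ (a + 1) * Yv ^ b) := by
  rcases a with _ | a <;> rcases b with _ | b <;>
  simp [W2, Mf, Dx, Dy, Xv, Yv, pderiv_X, MvPolynomial.smul_eq_C_mul] <;> ring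

theorem T_mono (T : Module.End ℂ R2)
    (hT : T = Mf (Xv ^ 4) * Dx * Dx - (2 : ℂ) • (Mf (Xv ^ 3) * Dx)
        - (2 : ℂ) • (Mf (Xv ^ 2 * Yv) * Dy) + (2 : ℂ) • Mf (Xv ^ 2)) (a b : ℕ) :
    T (Xv ^ a * Yv ^ b) =
    ((a : ℂ) * a - 3 * a + 2 - 2 * b) • (Xv ^ (a + 2) * Yv ^ b) := by
  subst hT
  have h2 : (C 2 : R2) = 2 := map_ofNat C 2
  have h3 : (C 3 : R2) = 3 := map_ofNat C 3
  rcases a with _ | _ | a <;> rcases b with _ | b <;>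
  simp [h2, h3, Mf, Dx, Dy, Xv, Yv, pderiv_X, MvPolynomial.smul_eq_C_mul] <;> ring

/-- The inner derivation given by `W²`. -/
def adW (A : Module.End ℂ R2) : Module.End ℂ R2 := W2 2 2 * A - A * W2 2 2

theorem adW_zero : adW 0 = 0 := by simp [adW]

theorem adW_add (A B : Module.End ℂ R2) : adW (A + B) = adW A + adW B := by
  simp only [adW]; noncomm_ring

theorem adW_smul (c : ℂ) (A : Module.End ℂ R2) : adW (c • A) = c • adW A := by
  simp only [adW, mul_smul_comm, smul_mul_assoc, smul_sub]

theorem adW_mul (A B : Module.End ℂ R2) : adW (A * B) = adW A * B + A * adW B := by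
  simp only [adW, sub_mul, mul_sub, mul_assoc]; abel

theorem it_zero (n : ℕ) : adW^[n] 0 = 0 := by
  induction n with
  | zero => rfl
  | succ n ih => rw [Function.iterate_succ_apply, adW_zero, ih]

theorem it_add (n : ℕ) (A B : Module.End ℂ R2) :
    adW^[n] (A + B) = adW^[n] A + adW^[n] B := by
  induction n generalizing A B with
  | zero => rfl
  | succ n ih => simp only [Function.iterate_succ_apply, adW_add, ih]

theorem it_ge {m n : ℕ} (h : m ≤ n) {A : Module.End ℂ R2} (hA : adW^[m] A = 0) :
    adW^[n] A = 0 := by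
  obtain ⟨k, rfl⟩ := Nat.exists_eq_add_of_le' h
  rw [Function.iterate_add_apply, hA, it_zero]

theorem it_mul (s : ℕ) : ∀ (m n : ℕ), m + n = s → ∀ (A B : Module.End ℂ R2),
    adW^[m] A = 0 → adW^[n] B = 0 → adW^[s] (A * B) = 0 := by
  induction s with
  | zero =>
    intro m n h A B hA hB
    obtain rfl : m = 0 := by omega
    have : A = 0 := hA
    simp [this]
  | succ s ih =>
    intro m n h A B hA hB
    rcases m with _ | m
    · have : A = 0 := hA
      rw [this, zero_mul, it_zero]
    rcases n with _ | n
    · have : B = 0 := hB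
      rw [this, mul_zero, it_zero]
    rw [Function.iterate_succ_apply, adW_mul, it_add,
      ih m (n + 1) (by omega) _ _ hA hB, ih (m + 1) n (by omega) _ _ hA hB, add_zero]

theorem end_ext {A B : Module.End ℂ R2}
    (h : ∀ a b : ℕ, A (Xv ^ a * Yv ^ b) = B (Xv ^ a * Yv ^ b)) : A = B := by
  apply MvPolynomial.basisMonomials (Fin 2) ℂ |>.ext
  intro s
  have hs : (MvPolynomial.basisMonomials (Fin 2) ℂ) s = Xv ^ (s 0) * Yv ^ (s 1) := by
    simp [Xv, Yv, MvPolynomial.monomial_eq, Finsupp.prod_fintype]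
  rw [hs, h]

theorem W1_mono (a b : ℕ) : W1 (Xv ^ a * Yv ^ b) = (a : ℂ) • (Xv ^ (a - 1) * Yv ^ b) := by
  rcases a with _ | a <;>
  simp [W1, Dx, Xv, Yv, pderiv_X, MvPolynomial.smul_eq_C_mul]; ring

theorem W3_mono (a b : ℕ) : W3 2 (Xv ^ a * Yv ^ b) = ((a : ℂ) - 1) • (Xv ^ a * Yv ^ b) := by
  rcases a with _ | a <;>
  simp [W3, Mf, Dx, Xv, Yv, pderiv_X, MvPolynomial.smul_eq_C_mul]; ring

theorem W4_mono (a b : ℕ) : W4 (Xv ^ a * Yv ^ b) = (b : ℂ) • (Xv ^ a * Yv ^ b) := by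
  rcases b with _ | b <;>
  simp [W4, Mf, Dy, Xv, Yv, pderiv_X, MvPolynomial.smul_eq_C_mul]; ring

theorem W5_mono (i a b : ℕ) :
    W5i i (Xv ^ a * Yv ^ b) = (b : ℂ) • (Xv ^ (a + i) * Yv ^ (b - 1)) := by
  rcases b with _ | b <;>
  simp [W5i, Mf, Dy, Xv, Yv, pderiv_X, MvPolynomial.smul_eq_C_mul]; ring

theorem adW_app (A : Module.End ℂ R2) (v : R2) :
    adW A v = W2 2 2 (A v) - A (W2 2 2 v) := by simp [adW]

theorem adW_W2 : adW (W2 2 2) = 0 := by simp [adW]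

theorem adW_W4 : adW W4 = 0 := by
  apply end_ext; intro a b
  simp only [adW_app, W4_mono, W2_mono, map_smul, LinearMap.zero_apply, smul_smul, ← sub_smul]
  rw [mul_comm, sub_self, zero_smul]

theorem adW_W3 : adW (W3 2) = (-1 : ℂ) • W2 2 2 := by
  apply end_ext; intro a b
  simp only [adW_app, W3_mono, W2_mono, map_smul, LinearMap.smul_apply, smul_smul, ← sub_smul]
  congr 1; push_cast; ring

theorem adW_W1 : adW W1 = (-2 : ℂ) • W3 2 + (-2 : ℂ) • W4 := by
  apply end_ext; intro a b
  simp only [adW_app, W1_mono, W2_mono, W3_mono, W4_mono, map_smul, LinearMap.smul_apply,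
    LinearMap.add_apply, smul_smul]
  rcases a with _ | a
  · simp only [Nat.zero_add, Nat.sub_self, ← sub_smul, ← add_smul]
    simp [← sub_smul, ← add_smul, ← neg_smul]
    ring_nf
  · simp only [Nat.add_sub_cancel, ← sub_smul, ← add_smul]
    congr 1; push_cast; ring

theorem adW_W5 (i : ℕ) : adW (W5i i) = ((i : ℂ) - 2) • W5i (i + 1) := by
  apply end_ext; intro a b
  simp only [adW_app, W5_mono, W2_mono, map_smul, LinearMap.smul_apply, smul_smul]
  rw [show a + 1 + i = a + i + 1 by ring, show a + (i + 1) = a + i + 1 by ring, ← sub_smul]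
  rcases b with _ | b
  · simp
  · simp only [Nat.add_sub_cancel]
    congr 1; push_cast; ring

theorem it_T (T : Module.End ℂ R2)
    (hT : T = Mf (Xv ^ 4) * Dx * Dx - (2 : ℂ) • (Mf (Xv ^ 3) * Dx)
        - (2 : ℂ) • (Mf (Xv ^ 2 * Yv) * Dy) + (2 : ℂ) • Mf (Xv ^ 2)) (n : ℕ) : ∀ a : ℕ,
    adW^[n + 1] T (Xv ^ a * Yv ^ 1) =
      (-4 * (n + 1).factorial * a : ℂ) • (Xv ^ (a + n + 3) * Yv ^ 1) := by
  induction n with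
  | zero =>
    intro a
    simp only [Function.iterate_one, Nat.zero_add, adW_app, T_mono T hT, W2_mono, map_smul,
      smul_smul]
    rw [show a + 1 + 2 = a + 0 + 3 by ring, show a + 2 + 1 = a + 0 + 3 by ring, ← sub_smul]
    congr 1; push_cast; simp; ring
  | succ n ih =>
    intro a
    rw [Function.iterate_succ_apply', adW_app, ih, W2_mono, map_smul, map_smul, ih, W2_mono]
    simp only [smul_smul]
    rw [show a + 1 + n + 3 = a + (n + 1) + 3 by ring,
      show a + n + 3 + 1 = a + (n + 1) + 3 by ring, ← sub_smul]
    congr 1; rw [Nat.factorial_succ (n + 1)]; push_cast; ring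

theorem adjoin_nil (A : Module.End ℂ R2) (hA : A ∈ Algebra.adjoin ℂ
      ({W1, W2 2 2, W3 2, W4, W5i 0, W5i 1, W5i 2} : Set (Module.End ℂ R2))) :
    ∃ n, adW^[n] A = 0 := by
  induction hA using Algebra.adjoin_induction with
  | mem x hx =>
    refine ⟨3, ?_⟩
    simp only [Set.mem_insert_iff, Set.mem_singleton_iff] at hx
    rcases hx with rfl | rfl | rfl | rfl | rfl | rfl | rfl <;>
    simp [Function.iterate_succ_apply, adW_W1, adW_W2, adW_W3, adW_W4, adW_W5, adW_add,
      adW_smul, adW_zero, -neg_smul]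
  | algebraMap r =>
    refine ⟨1, ?_⟩
    simp [adW, Algebra.algebraMap_eq_smul_one]
  | add x y _ _ hx hy =>
    obtain ⟨m, hm⟩ := hx
    obtain ⟨n, hn⟩ := hy
    exact ⟨m + n, by rw [it_add, it_ge (by omega) hm, it_ge (by omega) hn, add_zero]⟩
  | mul x y _ _ hx hy =>
    obtain ⟨m, hm⟩ := hx
    obtain ⟨n, hn⟩ := hy
    exact ⟨m + n, it_mul _ m n rfl _ _ hm hn⟩

theorem stmt10 (T : Module.End ℂ R2)
    (hT : T = Mf (Xv ^ 4) * Dx * Dx - (2 : ℂ) • (Mf (Xv ^ 3) * Dx)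
        - (2 : ℂ) • (Mf (Xv ^ 2 * Yv) * Dy) + (2 : ℂ) • Mf (Xv ^ 2)) :
    (∀ v ∈ Smod 2 2 1, T v ∈ Smod 2 2 1) ∧
    T ∉ Algebra.adjoin ℂ
      ({W1, W2 2 2, W3 2, W4, W5i 0, W5i 1, W5i 2} : Set (Module.End ℂ R2)) := by
  constructor
  · intro v hv
    have hle : Smod 2 2 1 ≤ (Smod 2 2 1).comap T := by
      unfold Smod
      rw [Submodule.span_le]
      rintro _ ⟨i, j, hij, hj, rfl⟩
      simp only [Submodule.comap_coe, Set.mem_preimage, SetLike.mem_coe]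
      rw [T_mono T hT]
      have hcase : (i = 0 ∧ j = 0) ∨ (i = 1 ∧ j = 0) ∨ (i = 2 ∧ j = 0) ∨ (i = 0 ∧ j = 1) := by
        omega
      rcases hcase with ⟨rfl, rfl⟩ | ⟨rfl, rfl⟩ | ⟨rfl, rfl⟩ | ⟨rfl, rfl⟩
      · exact Submodule.smul_mem _ _ (Submodule.subset_span ⟨2, 0, by norm_num, by norm_num, rfl⟩)
      all_goals
        convert Submodule.zero_mem _
        norm_num
    exact hle hv
  · intro h
    obtain ⟨n, hn⟩ := adjoin_nil T h
    have h1 := it_T T hT n 1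
    rw [it_ge (Nat.le_succ n) hn, LinearMap.zero_apply] at h1
    rcases smul_eq_zero.mp h1.symm with h2 | h2
    · simp [Nat.factorial_ne_zero] at h2
    · simp [Xv, Yv] at h2
end
end

section
/- Let r, p ∈ ℕ with r ≥ 2, and define on R the generators W¹ = D_x, W² = M_{x²}∘D_x + r·M_{xy}∘D_y − p·M_x, W³ = M_x∘D_x − (p/2)·id, W⁴ = M_y∘D_y, and W^{5+i} = M_{xⁱ}∘D_y for 0 ≤ i ≤ r. For every k ∈ ℕ, the ℂ-subspace of End(R) spanned by all compositions of at most k elements of {W¹, …, W^{5+r}} (the empty composition being the identity) has dimension d_k satisfying 6·d_k = Σ_{t=0}^{k} (t+1)(t+2)((r+2)t+3). -/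
noncomputable section

open MvPolynomial

namespace Aux

/-- The monomial `x^a y^b`. -/
def mon (a b : ℕ) : R2 := Xv ^ a * Yv ^ b

lemma mon_eq (a b : ℕ) :
    mon a b = monomial (Finsupp.single 0 a + Finsupp.single 1 b) (1 : ℂ) := by
  simp [mon, Xv, Yv, X_pow_eq_monomial, monomial_mul]

lemma single_eq (s : Fin 2 →₀ ℕ) :
    Finsupp.single 0 (s 0) + Finsupp.single 1 (s 1) = s := by
  ext i; fin_cases i <;> simp

lemma end_ext {S T : Module.End ℂ R2} (h : ∀ a b, S (mon a b) = T (mon a b)) : S = T := by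
  apply (basisMonomials (Fin 2) ℂ).ext
  intro s
  have := h (s 0) (s 1)
  rw [mon_eq, single_eq] at this
  simpa using this

lemma coeff_mon (a b A B : ℕ) :
    coeff (Finsupp.single 0 A + Finsupp.single 1 B) (mon a b) =
      if a = A ∧ b = B then (1 : ℂ) else 0 := by
  rw [mon_eq, coeff_monomial]
  congr 1
  apply propext
  constructor
  · intro h
    have h0 := DFunLike.congr_fun h 0
    have h1 := DFunLike.congr_fun h 1
    simp at h0 h1
    exact ⟨h0, h1⟩
  · rintro ⟨rfl, rfl⟩; rfl

/-- The operator `x^a y^b ↦ h(a,b) x^(a+c) y^(b-m)`. -/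
def Op (m : ℕ) (c : ℤ) (h : ℕ → ℕ → ℂ) : Module.End ℂ R2 :=
  (basisMonomials (Fin 2) ℂ).constr ℂ
    (fun s => h (s 0) (s 1) • mon ((s 0 : ℤ) + c).toNat (s 1 - m))

lemma Op_mon (m : ℕ) (c : ℤ) (h : ℕ → ℕ → ℂ) (a b : ℕ) :
    Op m c h (mon a b) = h a b • mon ((a : ℤ) + c).toNat (b - m) := by
  have := (basisMonomials (Fin 2) ℂ).constr_basis ℂ
    (fun s => h (s 0) (s 1) • mon ((s 0 : ℤ) + c).toNat (s 1 - m))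
    (Finsupp.single 0 a + Finsupp.single 1 b)
  simp only [coe_basisMonomials] at this
  rw [← mon_eq] at this
  simpa [Op] using this

lemma Op_add (m c h h') : Op m c (h + h') = Op m c h + Op m c h' := by
  apply end_ext; intro a b; simp [Op_mon, add_smul]

lemma Op_smul (m c h) (z : ℂ) : Op m c (z • h) = z • Op m c h := by
  apply end_ext; intro a b; simp [Op_mon, mul_smul]

lemma Op_zero (m c) : Op m c 0 = 0 := by
  apply end_ext; intro a b; simp [Op_mon]

lemma Dx_mon (a b : ℕ) : Dx (mon a b) = (a : ℂ) • mon (a - 1) b := by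
  rw [mon_eq, mon_eq]
  have e : (Finsupp.single 0 a + Finsupp.single 1 b - Finsupp.single 0 1 : Fin 2 →₀ ℕ) =
      Finsupp.single 0 (a - 1) + Finsupp.single 1 b := by
    ext i; fin_cases i <;> simp
  simp only [Dx, Derivation.coeFn_coe, pderiv_monomial, e]
  rw [smul_monomial]
  simp

lemma Dy_mon (a b : ℕ) : Dy (mon a b) = (b : ℂ) • mon a (b - 1) := by
  rw [mon_eq, mon_eq]
  have e : (Finsupp.single 0 a + Finsupp.single 1 b - Finsupp.single 1 1 : Fin 2 →₀ ℕ) =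
      Finsupp.single 0 a + Finsupp.single 1 (b - 1) := by
    ext i; fin_cases i <;> simp
  simp only [Dy, Derivation.coeFn_coe, pderiv_monomial, e]
  rw [smul_monomial]
  simp

lemma Mx_mon (i a b : ℕ) : Mf (Xv ^ i) (mon a b) = mon (a + i) b := by
  simp [Mf, mon]; ring

lemma My_mon (a b : ℕ) : Mf Yv (mon a b) = mon a (b + 1) := by
  simp [Mf, mon]; ring

lemma Mxy_mon (a b : ℕ) : Mf (Xv * Yv) (mon a b) = mon (a + 1) (b + 1) := by
  simp [Mf, mon]; ring

lemma W4_mon (a b : ℕ) : W4 (mon a b) = (b : ℂ) • mon a b := by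
  rcases b with _ | b <;> simp [W4, Dy_mon, My_mon]

lemma E_mon (a b : ℕ) : (Mf Xv * Dx) (mon a b) = (a : ℂ) • mon a b := by
  have := Mx_mon 1
  rw [pow_one] at this
  rcases a with _ | a <;> simp [Dx_mon, this]

lemma W3_mon (p a b : ℕ) : W3 p (mon a b) = ((a : ℂ) - p / 2) • mon a b := by
  rw [W3, LinearMap.sub_apply, E_mon, sub_smul]; simp

lemma W2_mon (r p a b : ℕ) :
    W2 r p (mon a b) = ((a : ℂ) + r * b - p) • mon (a + 1) b := by
  have h1 := Mx_mon 1
  rw [pow_one] at h1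
  have e1 : (Mf (Xv ^ 2) * Dx) (mon a b) = (a : ℂ) • mon (a + 1) b := by
    rcases a with _ | a <;> simp [Dx_mon, Mx_mon]
  have e2 : (Mf (Xv * Yv) * Dy) (mon a b) = (b : ℂ) • mon (a + 1) b := by
    rcases b with _ | b <;> simp [Dy_mon, Mxy_mon]
  rw [W2, LinearMap.sub_apply, LinearMap.add_apply, LinearMap.smul_apply, LinearMap.smul_apply,
    e1, e2, h1, smul_smul, sub_smul, add_smul]

lemma W5_mon (i a b : ℕ) : W5i i (mon a b) = (b : ℂ) • mon (a + i) (b - 1) := by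
  simp [W5i, Dy_mon, Mx_mon]

/-! ### polynomial functions -/

/-- Polynomial functions of degree at most `d`. -/
def Pd (d : ℕ) : Submodule ℂ (ℕ → ℕ → ℂ) :=
  Submodule.span ℂ {g | ∃ i j : ℕ, i + j ≤ d ∧ g = fun (a b : ℕ) => (a : ℂ) ^ i * (b : ℂ) ^ j}

lemma Pd_mono {d e : ℕ} (h : d ≤ e) : Pd d ≤ Pd e := by
  apply Submodule.span_mono
  rintro g ⟨i, j, hij, rfl⟩
  exact ⟨i, j, hij.trans h, rfl⟩

lemma Pd_mul {d e : ℕ} {g h : ℕ → ℕ → ℂ} (hg : g ∈ Pd d) (hh : h ∈ Pd e) :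
    g * h ∈ Pd (d + e) := by
  have := Submodule.mul_mem_mul hg hh
  rw [Pd, Pd, Submodule.span_mul_span] at this
  refine Submodule.span_mono ?_ this
  rintro _ ⟨_, ⟨i, j, hij, rfl⟩, _, ⟨i', j', hij', rfl⟩, rfl⟩
  refine ⟨i + i', j + j', by omega, ?_⟩
  ext a b
  simp; ring

lemma Pd_one (d : ℕ) : (1 : ℕ → ℕ → ℂ) ∈ Pd d :=
  Submodule.subset_span ⟨0, 0, by simp, by ext; simp⟩

lemma Pd_lin (α β γ : ℂ) : (fun a b : ℕ => α * (a : ℂ) + β * b + γ) ∈ Pd 1 := by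
  have h1 : (fun a b : ℕ => (a : ℂ) ^ 1 * (b : ℂ) ^ 0) ∈ Pd 1 :=
    Submodule.subset_span ⟨1, 0, by simp, rfl⟩
  have h2 : (fun a b : ℕ => (a : ℂ) ^ 0 * (b : ℂ) ^ 1) ∈ Pd 1 :=
    Submodule.subset_span ⟨0, 1, by simp, rfl⟩
  have := (Pd 1).add_mem ((Pd 1).add_mem ((Pd 1).smul_mem α h1) ((Pd 1).smul_mem β h2))
    ((Pd 1).smul_mem γ (Pd_one 1))
  convert this using 1
  ext a b; simp

/-- the falling factorial as a complex function -/
def df (s : ℕ) : ℕ → ℕ → ℂ := fun a _ => (a.descFactorial s : ℂ)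

/-- the factor coming from powers of `W2` -/
def qf (r p t : ℕ) : ℕ → ℕ → ℂ :=
  fun a b => ∏ u ∈ Finset.range t, ((a : ℂ) + u + r * b - p)

lemma df_succ (s a b : ℕ) : df (s + 1) a b = df s a b * ((a : ℂ) - s) := by
  simp only [df]
  rw [Nat.descFactorial_succ]
  rcases le_or_gt s a with h | h
  · push_cast [h]; ring
  · rw [Nat.descFactorial_of_lt h]; simp

lemma qf_succ (r p t a b : ℕ) :
    qf r p (t + 1) a b = qf r p t a b * ((a : ℂ) + t + r * b - p) := by
  simp [qf, Finset.prod_range_succ]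

lemma df_div (s d : ℕ) : ∃ G ∈ Pd d, df (s + d) = df s * G := by
  induction d with
  | zero => exact ⟨1, Pd_one _, by simp⟩
  | succ d ih =>
    obtain ⟨G, hG, h⟩ := ih
    refine ⟨G * (fun a b : ℕ => 1 * (a : ℂ) + 0 * b + (-((s + d : ℕ) : ℂ))),
      Pd_mul hG (Pd_lin _ _ _), ?_⟩
    ext a b
    rw [← add_assoc, df_succ, h]
    simp; ring

lemma qf_div (r p s d : ℕ) : ∃ G ∈ Pd d, qf r p (s + d) = qf r p s * G := by
  induction d with
  | zero => exact ⟨1, Pd_one _, by simp⟩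
  | succ d ih =>
    obtain ⟨G, hG, h⟩ := ih
    refine ⟨G * (fun a b : ℕ => 1 * (a : ℂ) + (r : ℂ) * b + (((s + d : ℕ) : ℂ) - p)),
      Pd_mul hG (Pd_lin _ _ _), ?_⟩
    ext a b
    rw [← add_assoc, qf_succ, h]
    simp; ring

/-- lower excess -/
def sl (c : ℤ) : ℕ := (-c).toNat
/-- upper excess -/
def tu (r m : ℕ) (c : ℤ) : ℕ := (c - (r * m : ℕ)).toNat

/-- the full prefactor -/
def ff (r p m : ℕ) (c : ℤ) : ℕ → ℕ → ℂ :=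
  df (sl c) * qf r p (tu r m c) * (fun _ b => (b.descFactorial m : ℂ))

/-- basis operators, index `(m, i, j, c)` -/
def Bs (r p : ℕ) (x : ℕ × ℕ × ℕ × ℤ) : Module.End ℂ R2 :=
  Op x.1 x.2.2.2 (ff r p x.1 x.2.2.2 * fun (a b : ℕ) => (a : ℂ) ^ x.2.1 * (b : ℂ) ^ x.2.2.1)

/-- index set -/
def SS (r k : ℕ) : Set (ℕ × ℕ × ℕ × ℤ) :=
  {x | x.1 + (sl x.2.2.2 + tu r x.1 x.2.2.2) + (x.2.1 + x.2.2.1) ≤ k}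

/-- span of the basis operators -/
def UU (r p k : ℕ) : Submodule ℂ (Module.End ℂ R2) := Submodule.span ℂ (Bs r p '' SS r k)

lemma UU_mono (r p : ℕ) {k l : ℕ} (h : k ≤ l) : UU r p k ≤ UU r p l := by
  apply Submodule.span_mono
  apply Set.image_mono
  intro x hx
  exact le_trans hx h

lemma mem_UU (r p k m : ℕ) (c : ℤ) (n : ℕ) (g : ℕ → ℕ → ℂ) (hg : g ∈ Pd n)
    (hk : m + (sl c + tu r m c) + n ≤ k) : Op m c (ff r p m c * g) ∈ UU r p k := by
  induction hg using Submodule.span_induction with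
  | mem g h =>
    obtain ⟨i, j, hij, rfl⟩ := h
    refine Submodule.subset_span ⟨(m, i, j, c), ?_, rfl⟩
    simp only [SS, Set.mem_ofPred_eq]
    omega
  | zero => rw [mul_zero, Op_zero]; exact Submodule.zero_mem _
  | add x y _ _ hx hy => rw [mul_add, Op_add]; exact Submodule.add_mem _ hx hy
  | smul z x _ hx => rw [mul_smul_comm, Op_smul]; exact Submodule.smul_mem _ _ hx

lemma mem_UU' {r p k m : ℕ} {c : ℤ} (n : ℕ) {h g : ℕ → ℕ → ℂ} (hg : g ∈ Pd n)
    (hk : m + (sl c + tu r m c) + n ≤ k) (e : h = ff r p m c * g) : Op m c h ∈ UU r p k := by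
  rw [e]; exact mem_UU r p k m c n g hg hk

lemma df_zero_of {c : ℤ} {a : ℕ} (b : ℕ) (h : (a : ℤ) + c < 0) : df (sl c) a b = 0 := by
  simp only [df, sl]
  rw [Nat.descFactorial_of_lt (by omega)]; simp

/-- general divisibility of prefactors -/
lemma ff_div (r p : ℕ) {s s' t t' : ℕ} (hs : s' ≤ s) (ht : t' ≤ t) :
    ∃ G ∈ Pd ((s - s') + (t - t')), df s * qf r p t = df s' * qf r p t' * G := by
  obtain ⟨G, hG, h⟩ := df_div s' (s - s')
  obtain ⟨H, hH, h'⟩ := qf_div r p t' (t - t')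
  rw [Nat.add_sub_cancel' hs] at h
  rw [Nat.add_sub_cancel' ht] at h'
  exact ⟨G * H, Pd_mul hG hH, by rw [h, h']; ring⟩

lemma W1_mem (r p k m : ℕ) (c : ℤ) (n : ℕ) (g : ℕ → ℕ → ℂ) (hg : g ∈ Pd n)
    (hk : m + (sl c + tu r m c) + n ≤ k) :
    W1 * Op m c (ff r p m c * g) ∈ UU r p (k + 1) := by
  have e : W1 * Op m c (ff r p m c * g) =
      Op m (c - 1) (fun a b => (1 * (a : ℂ) + 0 * b + c) * (ff r p m c * g) a b) := by
    apply end_ext; intro a b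
    rw [Module.End.mul_apply, Op_mon, Op_mon, map_smul, W1, Dx_mon, smul_smul]
    rcases lt_or_ge ((a : ℤ) + c) 0 with h | h
    · simp [ff, df_zero_of b h]
    · have h1 : (((a : ℤ) + c).toNat : ℂ) = a + c := by
        have := Int.toNat_of_nonneg h
        exact_mod_cast congrArg (Int.cast : ℤ → ℂ) this
      have h2 : ((a : ℤ) + c).toNat - 1 = ((a : ℤ) + (c - 1)).toNat := by omega
      rw [h1, h2]; congr 1; ring
  rw [e]
  rcases le_or_gt c 0 with h | h
  · refine mem_UU' n hg ?_ ?_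
    · simp only [sl, tu] at *; omega
    · ext a b
      have h1 : sl (c - 1) = sl c + 1 := by simp only [sl]; omega
      have h2 : tu r m (c - 1) = 0 := by simp only [tu]; omega
      have h3 : tu r m c = 0 := by simp only [tu]; omega
      have h4 : (c : ℂ) = -(sl c : ℂ) := by
        have : c = -(sl c : ℤ) := by simp only [sl]; omega
        exact_mod_cast congrArg (Int.cast : ℤ → ℂ) this
      simp only [ff, Pi.mul_apply, h1, h2, h3, df_succ, h4]
      ring
  · obtain ⟨G, hG, hh⟩ := ff_div r p (s := sl c) (s' := sl (c - 1)) (t := tu r m c)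
      (t' := tu r m (c - 1)) (by simp only [sl]; omega) (by simp only [tu]; omega)
    refine mem_UU' _ (Pd_mul (Pd_mul (Pd_lin 1 0 c) hG) hg) ?_ ?_
    · simp only [sl, tu] at *; omega
    · ext a b
      have := congrFun (congrFun hh a) b
      simp only [ff, Pi.mul_apply] at this ⊢
      rw [this]; ring

lemma W2_mem (r p k m : ℕ) (c : ℤ) (n : ℕ) (g : ℕ → ℕ → ℂ) (hg : g ∈ Pd n)
    (hk : m + (sl c + tu r m c) + n ≤ k) :
    W2 r p * Op m c (ff r p m c * g) ∈ UU r p (k + 1) := by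
  have e : W2 r p * Op m c (ff r p m c * g) =
      Op m (c + 1) (fun a b => (1 * (a : ℂ) + r * b + (c - r * m - p)) *
        (ff r p m c * g) a b) := by
    apply end_ext; intro a b
    rw [Module.End.mul_apply, Op_mon, Op_mon, map_smul, W2_mon, smul_smul]
    rcases lt_or_ge ((a : ℤ) + c) 0 with h | h
    · simp [ff, df_zero_of b h]
    rcases lt_or_ge b m with hb | hb
    · simp [ff, Nat.descFactorial_of_lt hb]
    · have h1 : (((a : ℤ) + c).toNat : ℂ) = a + c := by
        have := Int.toNat_of_nonneg h
        exact_mod_cast congrArg (Int.cast : ℤ → ℂ) this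
      have h2 : ((a : ℤ) + c).toNat + 1 = ((a : ℤ) + (c + 1)).toNat := by omega
      rw [h1, h2]; push_cast [hb]; congr 1; ring
  rw [e]
  rcases le_or_gt ((r * m : ℕ) : ℤ) c with h | h
  · refine mem_UU' n hg ?_ ?_
    · simp only [sl, tu] at *; omega
    · ext a b
      have h1 : tu r m (c + 1) = tu r m c + 1 := by simp only [tu]; omega
      have h2 : sl (c + 1) = 0 := by simp only [sl]; omega
      have h3 : sl c = 0 := by simp only [sl]; omega
      have h4 : (c : ℂ) = r * m + (tu r m c : ℂ) := by
        have : c = (r * m : ℕ) + (tu r m c : ℤ) := by simp only [tu]; omega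
        have := congrArg (Int.cast : ℤ → ℂ) this
        push_cast at this
        exact this
      simp only [ff, Pi.mul_apply, h1, h2, h3, qf_succ, h4]
      ring
  · obtain ⟨G, hG, hh⟩ := ff_div r p (s := sl c) (s' := sl (c + 1)) (t := tu r m c)
      (t' := tu r m (c + 1)) (by simp only [sl]; omega) (by simp only [tu]; omega)
    refine mem_UU' _ (Pd_mul (Pd_mul (Pd_lin 1 r (c - r * m - p)) hG) hg) ?_ ?_
    · simp only [sl, tu] at *; omega
    · ext a b
      have := congrFun (congrFun hh a) b
      simp only [ff, Pi.mul_apply] at this ⊢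
      rw [this]; ring

lemma W3_mem (r p k m : ℕ) (c : ℤ) (n : ℕ) (g : ℕ → ℕ → ℂ) (hg : g ∈ Pd n)
    (hk : m + (sl c + tu r m c) + n ≤ k) :
    W3 p * Op m c (ff r p m c * g) ∈ UU r p (k + 1) := by
  have e : W3 p * Op m c (ff r p m c * g) =
      Op m c (fun a b => (1 * (a : ℂ) + 0 * b + (c - p / 2)) *
        (ff r p m c * g) a b) := by
    apply end_ext; intro a b
    rw [Module.End.mul_apply, Op_mon, Op_mon, map_smul, W3_mon, smul_smul]
    rcases lt_or_ge ((a : ℤ) + c) 0 with h | h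
    · simp [ff, df_zero_of b h]
    · have h1 : (((a : ℤ) + c).toNat : ℂ) = a + c := by
        have := Int.toNat_of_nonneg h
        exact_mod_cast congrArg (Int.cast : ℤ → ℂ) this
      rw [h1]; congr 1; ring
  rw [e]
  refine mem_UU' _ (Pd_mul (Pd_lin 1 0 (c - p / 2)) hg) (by omega) ?_
  ext a b
  simp only [Pi.mul_apply]; ring

lemma W4_mem (r p k m : ℕ) (c : ℤ) (n : ℕ) (g : ℕ → ℕ → ℂ) (hg : g ∈ Pd n)
    (hk : m + (sl c + tu r m c) + n ≤ k) :
    W4 * Op m c (ff r p m c * g) ∈ UU r p (k + 1) := by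
  have e : W4 * Op m c (ff r p m c * g) =
      Op m c (fun a b => (0 * (a : ℂ) + 1 * b + (-m)) *
        (ff r p m c * g) a b) := by
    apply end_ext; intro a b
    rw [Module.End.mul_apply, Op_mon, Op_mon, map_smul, W4_mon, smul_smul]
    rcases lt_or_ge b m with hb | hb
    · simp [ff, Nat.descFactorial_of_lt hb]
    · push_cast [hb]; congr 1; ring
  rw [e]
  refine mem_UU' _ (Pd_mul (Pd_lin 0 1 (-m)) hg) (by omega) ?_
  ext a b
  simp only [Pi.mul_apply]; ring

lemma W5_mem (r p k m : ℕ) (c : ℤ) (n : ℕ) (g : ℕ → ℕ → ℂ) (hg : g ∈ Pd n)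
    (hk : m + (sl c + tu r m c) + n ≤ k) (i : ℕ) (hi : i ≤ r) :
    W5i i * Op m c (ff r p m c * g) ∈ UU r p (k + 1) := by
  have e : W5i i * Op m c (ff r p m c * g) =
      Op (m + 1) (c + i) (fun a b => ((b : ℂ) - m) * (ff r p m c * g) a b) := by
    apply end_ext; intro a b
    rw [Module.End.mul_apply, Op_mon, Op_mon, map_smul, W5_mon, smul_smul]
    rcases lt_or_ge ((a : ℤ) + c) 0 with h | h
    · simp [ff, df_zero_of b h]
    rcases lt_or_ge b m with hb | hb
    · simp [ff, Nat.descFactorial_of_lt hb]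
    · have h2 : ((a : ℤ) + c).toNat + i = ((a : ℤ) + (c + i)).toNat := by omega
      rw [h2, Nat.sub_sub]; push_cast [hb]; congr 1; ring
  rw [e]
  have hm : r * (m + 1) = r * m + r := by ring
  obtain ⟨G, hG, hh⟩ := ff_div r p (s := sl c) (s' := sl (c + i)) (t := tu r m c)
      (t' := tu r (m + 1) (c + i)) (by simp only [sl]; omega) (by simp only [tu, hm]; omega)
  refine mem_UU' _ (Pd_mul hG hg) ?_ ?_
  · simp only [sl, tu, hm] at *; omega
  · ext a b
    have := congrFun (congrFun hh a) b
    have h5 := df_succ m b b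
    simp only [df] at h5
    simp only [ff, Pi.mul_apply] at this ⊢
    rw [this, h5]; ring

lemma W_mem (r p k : ℕ) (W : Module.End ℂ R2) (hW : W ∈ Wset r p) (T : Module.End ℂ R2)
    (hT : T ∈ UU r p k) : W * T ∈ UU r p (k + 1) := by
  induction hT using Submodule.span_induction with
  | mem T h =>
    obtain ⟨⟨m, i, j, c⟩, hx, rfl⟩ := h
    have hg : (fun a b : ℕ => (a : ℂ) ^ i * (b : ℂ) ^ j) ∈ Pd (i + j) :=
      Submodule.subset_span ⟨i, j, le_rfl, rfl⟩
    have hx' : m + (sl c + tu r m c) + (i + j) ≤ k := hx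
    simp only [Wset, Set.mem_union, Set.mem_insert_iff, Set.mem_singleton_iff,
      Set.mem_ofPred_eq] at hW
    rcases hW with hW | ⟨l, hl, rfl⟩
    · rcases hW with rfl | rfl | rfl | rfl
      · exact W1_mem r p k m c _ _ hg hx'
      · exact W2_mem r p k m c _ _ hg hx'
      · exact W3_mem r p k m c _ _ hg hx'
      · exact W4_mem r p k m c _ _ hg hx'
    · exact W5_mem r p k m c _ _ hg hx' l hl
  | zero => rw [mul_zero]; exact Submodule.zero_mem _
  | add x y _ _ hx hy => rw [mul_add]; exact Submodule.add_mem _ hx hy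
  | smul z x _ hx => rw [mul_smul_comm]; exact Submodule.smul_mem _ _ hx

lemma one_mem_UU (r p : ℕ) : (1 : Module.End ℂ R2) ∈ UU r p 0 := by
  refine Submodule.subset_span ⟨(0, 0, 0, 0), ?_, ?_⟩
  · simp [SS, sl, tu]
  · apply end_ext; intro a b
    simp [Bs, Op_mon, ff, df, qf, sl, tu]

lemma list_mem (r p : ℕ) (l : List (Module.End ℂ R2)) (hl : ∀ a ∈ l, a ∈ Wset r p) :
    l.prod ∈ UU r p l.length := by
  induction l with
  | nil => exact one_mem_UU r p
  | cons a l ih =>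
    rw [List.prod_cons, List.length_cons]
    exact W_mem r p _ a (hl a (by simp)) _ (ih fun b hb => hl b (by simp [hb]))

/-- the span in question -/
def VV (r p k : ℕ) : Submodule ℂ (Module.End ℂ R2) := Submodule.span ℂ (prodsLE k (Wset r p))

lemma VV_le (r p k : ℕ) : VV r p k ≤ UU r p k := by
  apply Submodule.span_le.2
  rintro T ⟨l, hlen, hl, rfl⟩
  exact UU_mono r p hlen (list_mem r p l hl)

lemma VV_mono (r p : ℕ) {k l : ℕ} (h : k ≤ l) : VV r p k ≤ VV r p l := by
  apply Submodule.span_mono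
  rintro T ⟨L, hlen, hl, rfl⟩
  exact ⟨L, hlen.trans h, hl, rfl⟩

lemma VV_mul {r p k l : ℕ} {S T : Module.End ℂ R2} (hS : S ∈ VV r p k) (hT : T ∈ VV r p l) :
    S * T ∈ VV r p (k + l) := by
  have := Submodule.mul_mem_mul hS hT
  rw [VV, VV, Submodule.span_mul_span] at this
  refine Submodule.span_mono ?_ this
  rintro _ ⟨_, ⟨L, hL, hL', rfl⟩, _, ⟨M, hM, hM', rfl⟩, rfl⟩
  refine ⟨L ++ M, by simp; omega, ?_, by simp⟩
  intro a ha
  rcases List.mem_append.1 ha with h | h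
  · exact hL' a h
  · exact hM' a h

lemma VV_one (r p k : ℕ) : 1 ∈ VV r p k :=
  Submodule.subset_span ⟨[], by simp, by simp, rfl⟩

lemma VV_gen {r p : ℕ} {W : Module.End ℂ R2} (h : W ∈ Wset r p) : W ∈ VV r p 1 :=
  Submodule.subset_span ⟨[W], by simp, by simpa using h, by simp⟩

lemma VV_pow {r p : ℕ} {W : Module.End ℂ R2} (h : W ∈ VV r p 1) (n : ℕ) :
    W ^ n ∈ VV r p n := by
  induction n with
  | zero => exact VV_one _ _ _
  | succ n ih => rw [pow_succ]; exact VV_mul ih h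

lemma xD_mem (r p m : ℕ) : ∀ c : ℕ, c ≤ r * m →
    Op m c (fun _ b => (b.descFactorial m : ℂ)) ∈ VV r p m := by
  induction m with
  | zero =>
    intro c hc
    have : c = 0 := by simpa using hc
    subst this
    have e : Op 0 ((0 : ℕ) : ℤ) (fun _ b => (b.descFactorial 0 : ℂ)) = 1 := by
      apply end_ext; intro a b; simp [Op_mon]
    rw [e]; exact VV_one _ _ _
  | succ m ih =>
    intro c hc
    rw [Nat.mul_succ] at hc
    have h1 := ih (c - min c r) (by omega)
    have h2 : W5i (min c r) ∈ VV r p 1 :=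
      VV_gen (Or.inr ⟨min c r, by omega, rfl⟩)
    have h3 := VV_mul h2 h1
    rw [add_comm] at h3
    convert h3 using 1
    apply end_ext; intro a b
    rw [Module.End.mul_apply, Op_mon, Op_mon, map_smul, W5_mon, smul_smul]
    have e1 : ((a : ℤ) + ((c - min c r : ℕ) : ℤ)).toNat + min c r = ((a : ℤ) + c).toNat := by
      omega
    rw [e1, Nat.sub_sub]
    congr 1
    rw [Nat.descFactorial_succ]
    push_cast; ring

lemma pow_diag (T : Module.End ℂ R2) (z : ℂ) (v : R2) (h : T v = z • v) (n : ℕ) :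
    (T ^ n) v = z ^ n • v := by
  induction n with
  | zero => simp
  | succ n ih => rw [pow_succ', Module.End.mul_apply, ih, map_smul, h, smul_smul, pow_succ]

lemma Dx_pow (s a b : ℕ) : (W1 ^ s) (mon a b) = df s a b • mon (a - s) b := by
  induction s with
  | zero => simp [df]
  | succ s ih =>
    rw [pow_succ', Module.End.mul_apply, ih, map_smul, W1, Dx_mon, smul_smul, Nat.sub_sub]
    congr 1
    simp only [df, Nat.descFactorial_succ]
    push_cast; ring

lemma W2_pow (r p t a b : ℕ) : (W2 r p ^ t) (mon a b) = qf r p t a b • mon (a + t) b := by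
  induction t with
  | zero => simp [qf]
  | succ t ih =>
    rw [pow_succ', Module.End.mul_apply, ih, map_smul, W2_mon, smul_smul, qf_succ]
    push_cast; rfl

lemma Bs_mem (r p k : ℕ) (x : ℕ × ℕ × ℕ × ℤ) (hx : x ∈ SS r k) : Bs r p x ∈ VV r p k := by
  obtain ⟨m, i, j, c⟩ := x
  have hx' : m + (sl c + tu r m c) + (i + j) ≤ k := hx
  have hE : Mf Xv * Dx ∈ VV r p 1 := by
    have h3 : W3 p ∈ VV r p 1 := VV_gen (Or.inl (by simp))
    have := (VV r p 1).add_mem h3 ((VV r p 1).smul_mem ((p : ℂ) / 2) (VV_one r p 1))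
    simpa [W3] using this
  have hF : W4 ∈ VV r p 1 := VV_gen (Or.inl (by simp))
  have h1 : W1 ∈ VV r p 1 := VV_gen (Or.inl (by simp))
  have h2 : W2 r p ∈ VV r p 1 := VV_gen (Or.inl (by simp))
  have h5 := xD_mem r p m (min c.toNat (r * m)) (by omega)
  have H := VV_mul (VV_mul h5 (VV_mul (VV_pow h1 (sl c)) (VV_pow h2 (tu r m c))))
    (VV_mul (VV_pow hE i) (VV_pow hF j))
  refine VV_mono r p hx' ?_
  convert H using 1
  apply end_ext; intro a b
  simp only [Bs, Module.End.mul_apply]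
  rw [pow_diag W4 _ _ (W4_mon a b), map_smul, pow_diag _ _ _ (E_mon a b), Op_mon]
  simp only [map_smul, W2_pow, Dx_pow, Op_mon, smul_smul]
  rcases le_or_gt 0 c with hc | hc
  · have hs : sl c = 0 := by simp only [sl]; omega
    have e : ((a + tu r m c - sl c : ℕ) : ℤ) + ((min c.toNat (r * m) : ℕ) : ℤ) = (a : ℤ) + c := by
      simp only [tu, sl]; omega
    rw [e]
    congr 1
    simp only [ff, hs, Pi.mul_apply, df]
    simp; ring
  · have ht : tu r m c = 0 := by simp only [tu]; omega
    have e : (((a + tu r m c - sl c : ℕ) : ℤ) + ((min c.toNat (r * m) : ℕ) : ℤ)).toNat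
        = ((a : ℤ) + c).toNat := by
      simp only [tu, sl]; omega
    rw [e]
    congr 1
    simp only [ff, ht, Pi.mul_apply, add_zero]
    ring

lemma VV_eq (r p k : ℕ) : VV r p k = UU r p k := by
  apply le_antisymm (VV_le r p k)
  apply Submodule.span_le.2
  rintro _ ⟨x, hx, rfl⟩
  exact Bs_mem r p k x hx

/-! ### Linear independence -/

lemma ff_ne (r p m : ℕ) (c : ℤ) (a b : ℕ) (ha : p + sl c + 1 ≤ a) (hb : m + 1 ≤ b) :
    ff r p m c a b ≠ 0 := by
  simp only [ff, Pi.mul_apply]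
  refine mul_ne_zero (mul_ne_zero ?_ ?_) ?_
  · simp only [df, Ne, Nat.cast_eq_zero, Nat.descFactorial_eq_zero_iff_lt]; omega
  · simp only [qf]
    rw [Finset.prod_ne_zero_iff]
    intro u _
    have : (a : ℂ) + u + r * b - p = ((a - p + u + r * b : ℕ) : ℂ) := by
      push_cast [show p ≤ a by omega]; ring
    rw [this]
    have : a - p + u + r * b ≠ 0 := by
      have : 0 ≤ r * b := Nat.zero_le _
      omega
    exact_mod_cast this
  · simp only [Ne, Nat.cast_eq_zero, Nat.descFactorial_eq_zero_iff_lt]; omega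

lemma inf_set (N : ℕ) : {z : ℂ | ∃ a : ℕ, N ≤ a ∧ z = a}.Infinite := by
  have h : (((↑) : ℕ → ℂ) '' Set.Ici N).Infinite :=
    (Set.Ici_infinite N).image (Nat.cast_injective.injOn)
  refine h.mono ?_
  rintro _ ⟨a, ha, rfl⟩
  exact ⟨a, ha, rfl⟩

lemma Bs_indep (r p : ℕ) : LinearIndependent ℂ (Bs r p) := by
  classical
  rw [linearIndependent_iff']
  rintro s g hs ⟨m, i, j, c⟩ hx
  set F := s.filter (fun y => y.1 = m ∧ y.2.2.2 = c) with hF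
  let P : R2 := ∑ y ∈ F,
    monomial (Finsupp.single 0 y.2.1 + Finsupp.single 1 y.2.2.1) (g y)
  have hP : P = 0 := by
    refine funext_set
      (fun l : Fin 2 => {z : ℂ | ∃ a : ℕ, p + sl c + m + 1 ≤ a ∧ z = a})
      (fun _ => inf_set _) ?_
    intro x hxx
    obtain ⟨a, ha, hxa⟩ := hxx 0 (Set.mem_univ _)
    obtain ⟨b, hb, hxb⟩ := hxx 1 (Set.mem_univ _)
    have hne := ff_ne r p m c a b (by omega) (by omega)
    have h1 := congrArg (fun T : Module.End ℂ R2 =>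
      coeff (Finsupp.single 0 ((a : ℤ) + c).toNat + Finsupp.single 1 (b - m)) (T (mon a b))) hs
    simp only [LinearMap.sum_apply, LinearMap.smul_apply, Bs, Op_mon, coeff_sum, coeff_smul,
      coeff_mon, LinearMap.zero_apply, coeff_zero] at h1
    have h2 : ff r p m c a b * eval x P = 0 := by
      rw [← h1]
      simp only [P, hF]
      rw [map_sum, Finset.mul_sum, Finset.sum_filter]
      apply Finset.sum_congr rfl
      rintro ⟨m', i', j', c'⟩ _
      have : (((a : ℤ) + c').toNat = ((a : ℤ) + c).toNat ∧ b - m' = b - m) ↔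
          (m' = m ∧ c' = c) := by
        simp only [sl] at ha
        omega
      simp only [this]
      split_ifs with h
      · obtain ⟨rfl, rfl⟩ := h
        simp [eval_monomial, Finsupp.prod_add_index', pow_add, hxa, hxb, Finsupp.prod_single_index]
        ring
      · simp
    rw [map_zero]
    exact (mul_eq_zero.1 h2).resolve_left hne
  have h3 : coeff (Finsupp.single 0 i + Finsupp.single 1 j) P = g (m, i, j, c) := by
    simp only [P, coeff_sum, coeff_monomial]
    rw [Finset.sum_eq_single (m, i, j, c)]
    · simp
    · rintro ⟨m', i', j', c'⟩ hy hne
      simp only [hF, Finset.mem_filter] at hy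
      obtain ⟨_, rfl, rfl⟩ := hy
      rw [if_neg]
      intro h
      have h0 := DFunLike.congr_fun h 0
      have h1 := DFunLike.congr_fun h 1
      simp at h0 h1
      subst h0 h1
      exact hne rfl
    · intro h
      exact absurd (by simp [hF, hx]) h
  rw [← h3, hP, coeff_zero]

/-! ### Counting -/

/-- the index set as a finset -/
def TT (r k : ℕ) : Finset (Σ _ : ℕ, Σ _ : ℕ, Σ _ : ℕ, ℤ) :=
  (Finset.range (k + 1)).sigma fun m => (Finset.range (k - m + 1)).sigma fun i =>
    (Finset.range (k - m - i + 1)).sigma fun j =>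
      Finset.Icc (-((k - m - i - j : ℕ) : ℤ)) ((r * m : ℕ) + ((k - m - i - j : ℕ) : ℤ))

/-- reindexing -/
def phi (x : Σ _ : ℕ, Σ _ : ℕ, Σ _ : ℕ, ℤ) : ℕ × ℕ × ℕ × ℤ := (x.1, x.2.1, x.2.2.1, x.2.2.2)

lemma phi_inj : Function.Injective phi := by
  rintro ⟨m, i, j, c⟩ ⟨m', i', j', c'⟩ h
  simp only [phi, Prod.mk.injEq] at h
  obtain ⟨rfl, rfl, rfl, rfl⟩ := h
  rfl

lemma finrank_UU (r p k : ℕ) : Module.finrank ℂ (UU r p k) = (TT r k).card := by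
  have hli : LinearIndependent ℂ (fun x : TT r k => Bs r p (phi x.1)) :=
    (Bs_indep r p).comp (fun x : TT r k => phi x.1) (phi_inj.comp Subtype.val_injective)
  have h := finrank_span_eq_card hli
  rw [Fintype.card_coe] at h
  rw [← h, UU]
  have e : Bs r p '' SS r k = Set.range (fun x : TT r k => Bs r p (phi x.1)) := by
    ext T
    constructor
    · rintro ⟨⟨m, i, j, c⟩, hx, rfl⟩
      refine ⟨⟨⟨m, i, j, c⟩, ?_⟩, rfl⟩
      simp only [SS, Set.mem_ofPred_eq, sl, tu] at hx
      simp only [TT, Finset.mem_sigma, Finset.mem_range, Finset.mem_Icc]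
      omega
    · rintro ⟨⟨⟨m, i, j, c⟩, hx⟩, rfl⟩
      refine ⟨(m, i, j, c), ?_, rfl⟩
      simp only [TT, Finset.mem_sigma, Finset.mem_range, Finset.mem_Icc] at hx
      simp only [SS, Set.mem_ofPred_eq, sl, tu]
      omega
  rw [e]

lemma refl_sum (n : ℕ) (f : ℕ → ℕ) :
    ∑ j ∈ Finset.range (n + 1), f (n - j) = ∑ j ∈ Finset.range (n + 1), f j := by
  have := Finset.sum_range_reflect f (n + 1)
  simpa using this

lemma sum1 (M q : ℕ) :
    ∑ j ∈ Finset.range (q + 1), (M + 1 + 2 * j) = (q + 1) * (M + 1 + q) := by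
  induction q with
  | zero => simp
  | succ q ih => rw [Finset.sum_range_succ, ih]; ring

lemma sum2 (M n : ℕ) :
    6 * ∑ q ∈ Finset.range (n + 1), (q + 1) * (M + 1 + q) =
      (n + 1) * (n + 2) * (3 * M + 3 + 2 * n) := by
  induction n with
  | zero => simp; ring
  | succ q ih => rw [Finset.sum_range_succ, mul_add, ih]; ring

lemma sum3 (A B : ℤ) (n : ℕ) :
    12 * ∑ q ∈ Finset.range n, ((q : ℤ) + 1) * (q + 2) * (A + B * q) =
      n * (n + 1) * (n + 2) * (4 * A + 3 * B * (n - 1)) := by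
  induction n with
  | zero => simp
  | succ q ih => rw [Finset.sum_range_succ, mul_add, ih]; push_cast; ring

lemma card_TT (r k : ℕ) : 6 * (TT r k).card =
    ∑ m ∈ Finset.range (k + 1), (k - m + 1) * (k - m + 2) * (3 * (r * m) + 3 + 2 * (k - m)) := by
  have h : ∀ M l : ℕ, (Finset.Icc (-(l : ℤ)) ((M : ℤ) + (l : ℤ))).card = M + 1 + 2 * l := by
    intro M l
    rw [Int.card_Icc]; omega
  simp only [TT, Finset.card_sigma, h]
  rw [Finset.mul_sum]
  apply Finset.sum_congr rfl
  intro m _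
  rw [← sum2, ← refl_sum (k - m) (fun q => (q + 1) * (r * m + 1 + q))]
  congr 1
  apply Finset.sum_congr rfl
  intro i _
  rw [← sum1, ← refl_sum (k - m - i) (fun j => r * m + 1 + 2 * j)]

lemma final_sum (r k : ℕ) :
    ∑ m ∈ Finset.range (k + 1), (k - m + 1) * (k - m + 2) * (3 * (r * m) + 3 + 2 * (k - m)) =
    ∑ t ∈ Finset.range (k + 1), (t + 1) * (t + 2) * ((r + 2) * t + 3) := by
  rw [← refl_sum k (fun m => (k - m + 1) * (k - m + 2) * (3 * (r * m) + 3 + 2 * (k - m)))]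
  have h1 := sum3 (3 * r * k + 3) (2 - 3 * r) (k + 1)
  have h2 := sum3 3 (r + 2) (k + 1)
  have e1 : ((∑ j ∈ Finset.range (k + 1), (k - (k - j) + 1) * (k - (k - j) + 2) *
      (3 * (r * (k - j)) + 3 + 2 * (k - (k - j))) : ℕ) : ℤ) =
      ∑ q ∈ Finset.range (k + 1), ((q : ℤ) + 1) * (q + 2) * (3 * r * k + 3 + (2 - 3 * r) * q) := by
    push_cast
    apply Finset.sum_congr rfl
    intro q hq
    have hq' : q ≤ k := by simpa [Nat.lt_succ_iff] using hq
    rw [Nat.sub_sub_self hq']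
    push_cast [hq']
    ring
  have e2 : ((∑ t ∈ Finset.range (k + 1), (t + 1) * (t + 2) * ((r + 2) * t + 3) : ℕ) : ℤ) =
      ∑ q ∈ Finset.range (k + 1), ((q : ℤ) + 1) * (q + 2) * (3 + (r + 2) * q) := by
    push_cast
    apply Finset.sum_congr rfl
    intro q hq
    ring
  have e3 : (((k + 1 : ℕ) : ℤ)) * ((k + 1 : ℕ) + 1) * ((k + 1 : ℕ) + 2) *
      (4 * (3 * r * k + 3) + 3 * (2 - 3 * r) * ((k + 1 : ℕ) - 1)) =
      ((k + 1 : ℕ) : ℤ) * ((k + 1 : ℕ) + 1) * ((k + 1 : ℕ) + 2) *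
      (4 * 3 + 3 * (r + 2) * ((k + 1 : ℕ) - 1)) := by
    push_cast; ring
  zify
  push_cast at e1 e2
  linarith

end Aux

theorem stmt11 (r p : ℕ) (hr : 2 ≤ r) (k : ℕ) :
    6 * Module.finrank ℂ ↥(Submodule.span ℂ (prodsLE k (Wset r p))) =
      ∑ t ∈ Finset.range (k + 1), (t + 1) * (t + 2) * ((r + 2) * t + 3) := by
  have h := Aux.VV_eq r p k
  rw [Aux.VV] at h
  rw [h, Aux.finrank_UU, Aux.card_TT, Aux.final_sum]
end
end
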